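/- arXiv:2601.20018 — 4 statements merged into one kernel-verified Lean document; each statement's English description precedes it below -/
import Mathlib

section
/- Let A = [a(i,j)] ∈ R^{N×N} be a fixed nonzero matrix, and define B_A := max_{i,j∈[N]} |a(i,j)| and V_A := (1/N) Σ_{i,j∈[N]} a(i,j)². Let G_1,...,G_N be i.i.d. standard Gaussian random variables independent of π. Then for every real λ with |λ| < √2 / B_A: E[ exp( λ Σ_{i=1}^N a(i,π(i)) G_i ) ] ≤ exp( ( V_A λ² − V_A B_A² λ⁴ / 4 ) / ( 2 ( 1 − B_A² λ² / 2 ) ) ). -/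
open scoped BigOperators Classical ENNReal
open MeasureTheory ProbabilityTheory

/-- Standard Gaussian product measure on `Fin n → ℝ` (i.i.d. `N(0,1)` coordinates). -/
noncomputable def gaussPi (n : ℕ) : Measure (Fin n → ℝ) :=
  Measure.pi (fun _ : Fin n => gaussianReal 0 1)

/-!
Given `π`, the expectation over the independent `G i` is at most `∏ i, exp (c i (π i))`, where
`c i j = λ² a i j² / 2` takes values in `[0, b]` with `b = B² λ² / 2 < 1`. On that interval
`exp c ≤ 1 + K c` for `K = (1 - b / 2) / (1 - b)`, so everything reduces to the permanent estimate
`∑ σ, ∏ i, (1 + x i (σ i)) ≤ N! exp (N⁻¹ ∑ i, ∑ j, x i j)` for nonnegative `x`.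

Expanding the product over subsets `S` and discarding the constraint that `σ` be injective on `S`
leaves `∑ S, (∏ i ∈ S, r i) (N - #S)!`, with `r` the row sums of `x`. By Euler's integral this is
`∫ t > 0, ∏ i, (r i + t) e⁻ᵗ`. By AM-GM the product is at most `(v + t) ^ N`, `v` being the mean of
`r`, and translating by `v` bounds the integral by `eᵛ N!`.
-/

section Permanent

variable {ι : Type*} [Fintype ι] [DecidableEq ι]

lemma card_perm_forall_mem_apply_eq_self (S : Finset ι) :
    Fintype.card {σ : Equiv.Perm ι // ∀ i ∈ S, σ i = i} = (Fintype.card ι - S.card).factorial := by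
  have hcompl : Fintype.card {i // i ∉ S} = Fintype.card ι - S.card := by
    rw [Fintype.card_subtype_compl, Fintype.card_coe]
  rw [← hcompl, ← Fintype.card_perm,
    Fintype.card_congr (Equiv.Perm.subtypeEquivSubtypePerm fun i => i ∉ S)]
  simp only [not_not]

lemma card_filter_perm_restrict_eq_le (S : Finset ι) (f : S → ι) :
    (Finset.univ.filter fun σ : Equiv.Perm ι => (fun i : S => σ i) = f).card
      ≤ (Fintype.card ι - S.card).factorial := by
  rcases (Finset.univ.filter fun σ : Equiv.Perm ι => (fun i : S => σ i) = f).eq_empty_or_nonempty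
    with hempty | ⟨σ₀, hσ₀⟩
  · simp [hempty]
  rw [← card_perm_forall_mem_apply_eq_self, Fintype.card_subtype]
  refine Finset.card_le_card_of_injOn (σ₀⁻¹ * ·) (fun σ hσ => ?_) (mul_right_injective _).injOn
  simp only [Finset.coe_filter, Finset.mem_filter, Finset.mem_univ, true_and,
    Set.mem_ofPred_eq] at hσ hσ₀ ⊢
  intro i hi
  have hagree : σ i = σ₀ i := congrFun (hσ.trans hσ₀.symm) ⟨i, hi⟩
  rw [Equiv.Perm.mul_apply, hagree]
  exact σ₀.symm_apply_apply i

lemma sum_perm_prod_le_prod_sum_mul_factorial {R : Type*} [CommSemiring R] [PartialOrder R]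
    [IsOrderedRing R] {x : ι → ι → R} (hx : ∀ i j, 0 ≤ x i j) (S : Finset ι) :
    ∑ σ : Equiv.Perm ι, ∏ i ∈ S, x i (σ i)
      ≤ (∏ i ∈ S, ∑ j, x i j) * ((Fintype.card ι - S.card).factorial : R) := by
  have hfiber (f : S → ι) :
      ∑ σ : Equiv.Perm ι with (fun i : S => σ i) = f, ∏ i ∈ S, x i (σ i)
        ≤ (∏ i : S, x i (f i)) * ((Fintype.card ι - S.card).factorial : R) := by
    have hconst : ∀ σ ∈ Finset.univ.filter (fun σ : Equiv.Perm ι => (fun i : S => σ i) = f),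
        ∏ i ∈ S, x i (σ i) = ∏ i : S, x i (f i) := by
      intro σ hσ
      rw [← (Finset.mem_filter.mp hσ).2, Finset.prod_coe_sort S fun i => x i (σ i)]
    rw [Finset.sum_congr rfl hconst, Finset.sum_const, nsmul_eq_mul, mul_comm]
    gcongr
    · exact Finset.prod_nonneg fun i _ => hx _ _
    · exact card_filter_perm_restrict_eq_le S f
  calc ∑ σ : Equiv.Perm ι, ∏ i ∈ S, x i (σ i)
      = ∑ f : S → ι, ∑ σ : Equiv.Perm ι with (fun i : S => σ i) = f, ∏ i ∈ S, x i (σ i) :=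
        (Finset.sum_fiberwise _ _ _).symm
    _ ≤ ∑ f : S → ι, (∏ i : S, x i (f i)) * ((Fintype.card ι - S.card).factorial : R) :=
        Finset.sum_le_sum fun f _ => hfiber f
    _ = (∏ i ∈ S, ∑ j, x i j) * ((Fintype.card ι - S.card).factorial : R) := by
        rw [← Finset.sum_mul, ← Fintype.prod_sum, Finset.prod_coe_sort S fun i => ∑ j, x i j]

end Permanent

section EulerIntegral

variable {ι : Type*} [Fintype ι]

lemma integrableOn_pow_mul_exp_neg (k : ℕ) :
    IntegrableOn (fun t : ℝ => t ^ k * Real.exp (-t)) (Set.Ioi 0) := by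
  simpa [mul_comm] using Real.GammaIntegral_convergent (s := k + 1) (by positivity)

lemma integral_pow_mul_exp_neg (k : ℕ) :
    ∫ t in Set.Ioi (0 : ℝ), t ^ k * Real.exp (-t) = k.factorial := by
  rw [← Real.Gamma_nat_eq_factorial, Real.Gamma_eq_integral (by positivity)]
  simp [mul_comm]

lemma prod_add_mul_exp_neg_eq_sum (r : ι → ℝ) (t : ℝ) :
    (∏ i, (r i + t)) * Real.exp (-t)
      = ∑ S : Finset ι, (∏ i ∈ S, r i) * (t ^ (Fintype.card ι - S.card) * Real.exp (-t)) := by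
  simp only [Fintype.prod_add, Finset.prod_const, Finset.card_compl, Finset.sum_mul, mul_assoc]

lemma integrableOn_prod_add_mul_exp_neg (r : ι → ℝ) :
    IntegrableOn (fun t : ℝ => (∏ i, (r i + t)) * Real.exp (-t)) (Set.Ioi 0) := by
  simp_rw [prod_add_mul_exp_neg_eq_sum]
  exact integrable_finsetSum _ fun S _ => (integrableOn_pow_mul_exp_neg _).const_mul _

lemma integral_prod_add_mul_exp_neg (r : ι → ℝ) :
    ∫ t in Set.Ioi (0 : ℝ), (∏ i, (r i + t)) * Real.exp (-t)
      = ∑ S : Finset ι, (∏ i ∈ S, r i) * ((Fintype.card ι - S.card).factorial : ℝ) := by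
  simp_rw [prod_add_mul_exp_neg_eq_sum]
  rw [integral_finsetSum _ fun S _ => (integrableOn_pow_mul_exp_neg _).const_mul _]
  simp_rw [integral_const_mul, integral_pow_mul_exp_neg]

lemma integral_add_pow_mul_exp_neg_le {v : ℝ} (hv : 0 ≤ v) (n : ℕ) :
    ∫ t in Set.Ioi (0 : ℝ), (v + t) ^ n * Real.exp (-t) ≤ n.factorial * Real.exp v := by
  have hshift (t : ℝ) :
      (v + t) ^ n * Real.exp (-t) = Real.exp v * ((v + t) ^ n * Real.exp (-(v + t))) := by
    rw [mul_left_comm, ← Real.exp_add, neg_add, add_neg_cancel_left]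
  have htranslate : ∫ t in Set.Ioi (0 : ℝ), (v + t) ^ n * Real.exp (-(v + t))
      = ∫ s in Set.Ioi v, s ^ n * Real.exp (-s) := by
    simpa using (measurePreserving_add_left volume v).setIntegral_preimage_emb
      (measurableEmbedding_addLeft v) (fun s => s ^ n * Real.exp (-s)) (Set.Ioi v)
  have htail : ∫ s in Set.Ioi v, s ^ n * Real.exp (-s) ≤ n.factorial := by
    rw [← integral_pow_mul_exp_neg n]
    refine setIntegral_mono_set (integrableOn_pow_mul_exp_neg n) ?_
      (Set.Ioi_subset_Ioi hv).eventuallyLE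
    filter_upwards [ae_restrict_mem measurableSet_Ioi] with s (hs : 0 < s)
    exact mul_nonneg (pow_nonneg hs.le n) (Real.exp_pos _).le
  simp_rw [hshift, integral_const_mul, htranslate, mul_comm (Real.exp v)]
  gcongr

lemma prod_le_sum_div_card_pow {z : ι → ℝ} (hz : ∀ i, 0 ≤ z i) :
    ∏ i, z i ≤ ((∑ i, z i) / Fintype.card ι) ^ Fintype.card ι := by
  rcases isEmpty_or_nonempty ι with _ | _
  · simp
  have hamgm := Real.geom_mean_le_arith_mean Finset.univ (fun _ => 1) z (by simp)
    (by simp [Fintype.card_pos]) fun i _ => hz i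
  simp only [Real.rpow_one, one_mul, Finset.sum_const, Finset.card_univ, nsmul_eq_mul,
    mul_one] at hamgm
  calc ∏ i, z i = ((∏ i, z i) ^ (Fintype.card ι : ℝ)⁻¹) ^ Fintype.card ι :=
        (Real.rpow_inv_natCast_pow (Finset.prod_nonneg fun i _ => hz i) Fintype.card_ne_zero).symm
    _ ≤ ((∑ i, z i) / Fintype.card ι) ^ Fintype.card ι := by
        gcongr
        exact Real.rpow_nonneg (Finset.prod_nonneg fun i _ => hz i) _

lemma prod_add_le_mean_add_pow {r : ι → ℝ} {t : ℝ} (h : ∀ i, 0 ≤ r i + t) :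
    ∏ i, (r i + t) ≤ ((∑ i, r i) / Fintype.card ι + t) ^ Fintype.card ι := by
  rcases isEmpty_or_nonempty ι with _ | _
  · simp
  refine (prod_le_sum_div_card_pow h).trans_eq ?_
  rw [Finset.sum_add_distrib, Finset.sum_const, Finset.card_univ, nsmul_eq_mul, add_div,
    mul_div_cancel_left₀ _ (Nat.cast_ne_zero.mpr Fintype.card_ne_zero)]

lemma sum_prod_mul_factorial_le {r : ι → ℝ} (hr : ∀ i, 0 ≤ r i) :
    ∑ S : Finset ι, (∏ i ∈ S, r i) * ((Fintype.card ι - S.card).factorial : ℝ)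
      ≤ (Fintype.card ι).factorial * Real.exp ((∑ i, r i) / Fintype.card ι) := by
  set v := (∑ i, r i) / Fintype.card ι
  have hv_nonneg : 0 ≤ v := div_nonneg (Finset.sum_nonneg fun i _ => hr i) (Nat.cast_nonneg _)
  have hpow_integrable :
      IntegrableOn (fun t : ℝ => (v + t) ^ Fintype.card ι * Real.exp (-t)) (Set.Ioi 0) := by
    simpa using integrableOn_prod_add_mul_exp_neg fun _ : ι => v
  calc ∑ S : Finset ι, (∏ i ∈ S, r i) * ((Fintype.card ι - S.card).factorial : ℝ)
      = ∫ t in Set.Ioi (0 : ℝ), (∏ i, (r i + t)) * Real.exp (-t) :=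
        (integral_prod_add_mul_exp_neg r).symm
    _ ≤ ∫ t in Set.Ioi (0 : ℝ), (v + t) ^ Fintype.card ι * Real.exp (-t) := by
        refine setIntegral_mono_on (integrableOn_prod_add_mul_exp_neg r) hpow_integrable
          measurableSet_Ioi fun t (ht : 0 < t) => ?_
        gcongr
        exact prod_add_le_mean_add_pow fun i => add_nonneg (hr i) ht.le
    _ ≤ (Fintype.card ι).factorial * Real.exp v := integral_add_pow_mul_exp_neg_le hv_nonneg _

end EulerIntegral

section PermutationStatistic

variable {ι : Type*} [Fintype ι] [DecidableEq ι]

lemma sum_perm_prod_one_add_le {x : ι → ι → ℝ} (hx : ∀ i j, 0 ≤ x i j) :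
    ∑ σ : Equiv.Perm ι, ∏ i, (1 + x i (σ i))
      ≤ (Fintype.card ι).factorial * Real.exp ((∑ i, ∑ j, x i j) / Fintype.card ι) :=
  calc ∑ σ : Equiv.Perm ι, ∏ i, (1 + x i (σ i))
      = ∑ S : Finset ι, ∑ σ : Equiv.Perm ι, ∏ i ∈ S, x i (σ i) := by
        simp_rw [Finset.prod_one_add, Finset.powerset_univ]
        exact Finset.sum_comm
    _ ≤ ∑ S : Finset ι, (∏ i ∈ S, ∑ j, x i j) * ((Fintype.card ι - S.card).factorial : ℝ) :=
        Finset.sum_le_sum fun S _ => sum_perm_prod_le_prod_sum_mul_factorial hx S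
    _ ≤ (Fintype.card ι).factorial * Real.exp ((∑ i, ∑ j, x i j) / Fintype.card ι) :=
        sum_prod_mul_factorial_le fun i => Finset.sum_nonneg fun j _ => hx i j

-- The right-hand side is the Padé approximant `(1 + c / 2) / (1 - c / 2)` of `exp c`.
lemma exp_le_one_add_div_one_sub_half {c : ℝ} (hc : 0 ≤ c) (hc_lt : c < 2) :
    Real.exp c ≤ 1 + c / (1 - c / 2) := by
  have hden : 0 < 1 - c / 2 := by linarith
  have hlog := Real.le_log_one_add_of_nonneg (div_nonneg hc hden.le)
  have harg : 2 * (c / (1 - c / 2)) / (c / (1 - c / 2) + 2) = c := by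
    have hadd : c / (1 - c / 2) + 2 = 2 / (1 - c / 2) := by
      rw [div_add' _ _ _ hden.ne']
      ring
    rw [hadd, mul_div_assoc', div_div_div_cancel_right₀ hden.ne',
      mul_div_cancel_left₀ c two_ne_zero]
  rw [harg] at hlog
  exact (Real.le_log_iff_exp_le (by positivity)).mp hlog

lemma exp_le_one_add_mul_of_le {b c : ℝ} (hc : 0 ≤ c) (hcb : c ≤ b) (hb : b < 1) :
    Real.exp c ≤ 1 + (1 - b / 2) / (1 - b) * c := by
  have hslope : (1 - c / 2)⁻¹ ≤ (1 - b / 2) / (1 - b) := by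
    rw [inv_eq_one_div, div_le_div_iff₀ (by linarith) (by linarith)]
    nlinarith
  calc Real.exp c ≤ 1 + c / (1 - c / 2) := exp_le_one_add_div_one_sub_half hc (by linarith)
    _ = 1 + (1 - c / 2)⁻¹ * c := by rw [div_eq_inv_mul]
    _ ≤ 1 + (1 - b / 2) / (1 - b) * c := by gcongr

lemma sum_perm_exp_sum_le {b : ℝ} (hb : b < 1) {c : ι → ι → ℝ} (hc : ∀ i j, 0 ≤ c i j)
    (hcb : ∀ i j, c i j ≤ b) :
    ∑ σ : Equiv.Perm ι, Real.exp (∑ i, c i (σ i))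
      ≤ (Fintype.card ι).factorial
        * Real.exp ((1 - b / 2) / (1 - b) * ((∑ i, ∑ j, c i j) / Fintype.card ι)) := by
  set K := (1 - b / 2) / (1 - b)
  have hK : 0 ≤ K := div_nonneg (by linarith) (by linarith)
  calc ∑ σ : Equiv.Perm ι, Real.exp (∑ i, c i (σ i))
      ≤ ∑ σ : Equiv.Perm ι, ∏ i, (1 + K * c i (σ i)) := by
        simp_rw [Real.exp_sum]
        gcongr with σ _ i
        exact exp_le_one_add_mul_of_le (hc _ _) (hcb _ _) hb
    _ ≤ (Fintype.card ι).factorial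
          * Real.exp ((∑ i, ∑ j, K * c i j) / Fintype.card ι) :=
        sum_perm_prod_one_add_le fun i j => mul_nonneg hK (hc i j)
    _ = (Fintype.card ι).factorial
          * Real.exp (K * ((∑ i, ∑ j, c i j) / Fintype.card ι)) := by
        simp_rw [← Finset.mul_sum, mul_div_assoc]

end PermutationStatistic

section SubGaussian

variable {ι Ω : Type*} [Fintype ι] [MeasurableSpace Ω] {μ : Measure Ω} {X : ι → Ω → ℝ}

lemma lintegral_exp_mul_sum_le (hindep : iIndepFun X μ) (hX : ∀ i, HasSubgaussianMGF (X i) 1 μ)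
    (c : ι → ℝ) (lam : ℝ) :
    ∫⁻ ω, ENNReal.ofReal (Real.exp (lam * ∑ i, c i * X i ω)) ∂μ
      ≤ ENNReal.ofReal (Real.exp (∑ i, lam ^ 2 * c i ^ 2 / 2)) := by
  have hindep_mul : iIndepFun (fun i ω => c i * X i ω) μ :=
    hindep.comp (fun i y => c i * y) fun i => measurable_const_mul (c i)
  have hX_mul (i : ι) : HasSubgaussianMGF (fun ω => c i * X i ω) (‖c i‖₊ ^ 2) μ := by
    have hproxy : NNReal.mk (c i ^ 2) (sq_nonneg (c i)) * 1 = ‖c i‖₊ ^ 2 :=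
      NNReal.eq (by simp)
    exact hproxy ▸ (hX i).const_mul (c i)
  have hsum := HasSubgaussianMGF.sum_of_iIndepFun (s := Finset.univ) hindep_mul fun i _ => hX_mul i
  rw [← ofReal_integral_eq_lintegral_ofReal (hsum.integrable_exp_mul lam)
    (ae_of_all _ fun ω => (Real.exp_pos _).le)]
  refine ENNReal.ofReal_le_ofReal ((hsum.mgf_le lam).trans_eq ?_)
  congr 1
  push_cast
  rw [Finset.sum_mul, Finset.sum_div]
  exact Finset.sum_congr rfl fun i _ => by rw [Real.norm_eq_abs, sq_abs, mul_comm]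

lemma sq_mul_sq_div_two_lt_one {B lam : ℝ} (hlam : |lam| < Real.sqrt 2 / B) :
    B ^ 2 * lam ^ 2 / 2 < 1 := by
  have hB : 0 < B :=
    (div_pos_iff_of_pos_left (by positivity)).mp ((abs_nonneg lam).trans_lt hlam)
  have hsq := (sq_lt_sq₀ (by positivity) (by positivity)).mpr ((lt_div_iff₀ hB).mp hlam)
  rw [mul_pow, sq_abs, Real.sq_sqrt zero_le_two] at hsq
  linarith

theorem gaussian_randomized_mgf_general [DecidableEq ι] (hindep : iIndepFun X μ)
    (hX : ∀ i, HasSubgaussianMGF (X i) 1 μ) {a : ι → ι → ℝ} {B V lam : ℝ}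
    (hB : ∀ i j, |a i j| ≤ B) (hV : V = (∑ i, ∑ j, (a i j) ^ 2) / (Fintype.card ι : ℝ))
    (hlam : |lam| < Real.sqrt 2 / B) :
    (∑ σ : Equiv.Perm ι,
        ∫⁻ ω, ENNReal.ofReal (Real.exp (lam * ∑ i, a i (σ i) * X i ω)) ∂μ)
          / (Nat.factorial (Fintype.card ι) : ℝ≥0∞)
      ≤ ENNReal.ofReal (Real.exp
          ((V * lam ^ 2 - V * B ^ 2 * lam ^ 4 / 4) / (2 * (1 - B ^ 2 * lam ^ 2 / 2)))) := by
  have hb := sq_mul_sq_div_two_lt_one hlam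
  have hcb (i j : ι) : lam ^ 2 * a i j ^ 2 / 2 ≤ B ^ 2 * lam ^ 2 / 2 := by
    rw [mul_comm]
    gcongr ?_ * _ / _
    exact sq_le_sq.mpr ((hB i j).trans (le_abs_self B))
  have hmean : (∑ i, ∑ j, lam ^ 2 * a i j ^ 2 / 2) / Fintype.card ι = lam ^ 2 / 2 * V := by
    simp_rw [hV, ← Finset.sum_div, ← Finset.mul_sum]
    ring
  have hexponent : (1 - B ^ 2 * lam ^ 2 / 2 / 2) / (1 - B ^ 2 * lam ^ 2 / 2) * (lam ^ 2 / 2 * V)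
      = (V * lam ^ 2 - V * B ^ 2 * lam ^ 4 / 4) / (2 * (1 - B ^ 2 * lam ^ 2 / 2)) := by
    rw [div_mul_eq_mul_div, div_eq_div_iff (by linarith) (by linarith)]
    ring
  have hperm := sum_perm_exp_sum_le hb (fun i j => by positivity) hcb
  rw [hmean, hexponent, mul_comm] at hperm
  refine ENNReal.div_le_of_le_mul ?_
  rw [← ENNReal.ofReal_natCast, ← ENNReal.ofReal_mul (Real.exp_pos _).le]
  calc ∑ σ : Equiv.Perm ι, ∫⁻ ω, ENNReal.ofReal (Real.exp (lam * ∑ i, a i (σ i) * X i ω)) ∂μ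
      ≤ ∑ σ : Equiv.Perm ι, ENNReal.ofReal (Real.exp (∑ i, lam ^ 2 * a i (σ i) ^ 2 / 2)) :=
        Finset.sum_le_sum fun σ _ => lintegral_exp_mul_sum_le hindep hX (fun i => a i (σ i)) lam
    _ = ENNReal.ofReal (∑ σ : Equiv.Perm ι, Real.exp (∑ i, lam ^ 2 * a i (σ i) ^ 2 / 2)) :=
        (ENNReal.ofReal_sum_of_nonneg fun σ _ => (Real.exp_pos _).le).symm
    _ ≤ _ := ENNReal.ofReal_le_ofReal hperm

end SubGaussian

lemma iIndepFun_eval_gaussPi (n : ℕ) : iIndepFun (fun i (g : Fin n → ℝ) => g i) (gaussPi n) :=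
  iIndepFun_pi (X := fun _ => id) fun _ => aemeasurable_id

lemma hasSubgaussianMGF_id_gaussianReal (v : NNReal) :
    HasSubgaussianMGF id v (gaussianReal 0 v) where
  integrable_exp_mul := integrable_exp_mul_gaussianReal
  mgf_le t := by simp [mgf_id_gaussianReal]

lemma hasSubgaussianMGF_eval_gaussPi {n : ℕ} (i : Fin n) :
    HasSubgaussianMGF (fun g : Fin n → ℝ => g i) 1 (gaussPi n) := by
  have heval : MeasurePreserving (Function.eval i) (gaussPi n) (gaussianReal 0 1) :=
    measurePreserving_eval (fun _ => gaussianReal 0 1) i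
  have hid : HasSubgaussianMGF id 1 ((gaussPi n).map (Function.eval i)) :=
    heval.map_eq ▸ hasSubgaussianMGF_id_gaussianReal 1
  exact hid.of_map heval.aemeasurable

/-- MGF bound for a Gaussian-randomized single-indexed permutation statistic:
`π` uniform on `S_N` and `G₁,…,G_N` i.i.d. standard Gaussians independent of
`π`.  The expectation over `π` is the average over `S_N`, and the Gaussian
expectation is taken with respect to the product Gaussian measure. -/
theorem gaussian_randomized_mgf
    (N : ℕ) (hN : 0 < N)
    (a : Fin N → Fin N → ℝ) (hnonzero : ∃ i j, a i j ≠ 0)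
    (B V : ℝ)
    (hB : B = Finset.univ.sup'
        ⟨((⟨0, hN⟩ : Fin N), (⟨0, hN⟩ : Fin N)), Finset.mem_univ _⟩
        (fun p : Fin N × Fin N => |a p.1 p.2|))
    (hV : V = (∑ i, ∑ j, (a i j) ^ 2) / (N : ℝ))
    (lam : ℝ) (hlam : |lam| < Real.sqrt 2 / B) :
    (∑ σ : Equiv.Perm (Fin N),
        ∫⁻ g, ENNReal.ofReal (Real.exp (lam * ∑ i : Fin N, a i (σ i) * g i))
          ∂(gaussPi N)) / (Nat.factorial N : ℝ≥0∞)
      ≤ ENNReal.ofReal (Real.exp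
          ((V * lam ^ 2 - V * B ^ 2 * lam ^ 4 / 4) / (2 * (1 - B ^ 2 * lam ^ 2 / 2)))) := by
  have hle (i j : Fin N) : |a i j| ≤ B :=
    hB ▸ Finset.le_sup' (fun p : Fin N × Fin N => |a p.1 p.2|) (Finset.mem_univ (i, j))
  simpa only [Fintype.card_fin] using gaussian_randomized_mgf_general (iIndepFun_eval_gaussPi N)
    hasSubgaussianMGF_eval_gaussPi hle (by rw [Fintype.card_fin, hV]) hlam
end

section
/- Let A = [a(i,j)] ∈ R^{N×N} be a fixed matrix with all entries in [−1,1], let f(π) := Σ_{i=1}^N a(i,π(i)), and let V_A := (1/N) Σ_{i,j∈[N]} a(i,j)². Then for every real λ with |λ| ≤ 1/3: E[ exp( λ ( f(π) − E[f(π)] ) ) ] ≤ exp( 12 V_A λ² ). -/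
open scoped BigOperators Classical

/-- Expectation of `f` under the uniform distribution on `S_N`. -/
noncomputable def permExp (N : ℕ) (f : Equiv.Perm (Fin N) → ℝ) : ℝ :=
  (∑ σ : Equiv.Perm (Fin N), f σ) / (Nat.factorial N : ℝ)

/-!
A uniform permutation and its product with a transposition form an exchangeable pair. Symmetrising
over this pair bounds the derivative `m'` of the moment generating function `m` of the centred
statistic `X` by `t / 4 * 𝔼 Γ exp (t X)`, where `Γ` is `N` times the mean squared change of `X`
under a uniform transposition `(i j)`, with `i = j` allowed.

If the entries lie in `[0, 1]`, then `Γ ≤ 4 (X + 2 μ)` with `μ` the mean of the statistic, so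
`m' ≤ t (m' + 2 μ m)`. If they lie in `[-1, 1]`, then `Γ ≤ 8 (Y + 2 V)`, where `Y` is the centred
statistic of the array of squares and `V` is its mean. Gibbs' variational principle bounds
`𝔼 Y exp (t X)` by `2 t m' + V m`, because the first case, applied to the squares, controls the
exponential moment of `Y / 2`. In both cases `m' ≤ 2 A t m` on `[0, T]`, hence
`m T ≤ exp (A T²)`.
-/

section UniformAverages

open Real Set

variable {α : Type*} [Fintype α]

lemma sum_expect_comm {M : Type*} [AddCommMonoid M] [Module ℚ≥0 M] (f : α → α → M) :
    ∑ i, 𝔼 j, f i j = ∑ i, 𝔼 j, f j i := by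
  simp only [Finset.expect, ← Finset.smul_sum]
  rw [Finset.sum_comm]

lemma expect_perm_apply [DecidableEq α] {M : Type*} [AddCommMonoid M] [Module ℚ≥0 M]
    (g : α → M) (i : α) : 𝔼 σ : Equiv.Perm α, g (σ i) = 𝔼 j, g j := by
  have : Nonempty α := ⟨i⟩
  have value_independent (j : α) :
      𝔼 σ : Equiv.Perm α, g (σ i) = 𝔼 σ : Equiv.Perm α, g (σ j) :=
    Fintype.expect_equiv (Equiv.mulRight (Equiv.swap i j)) _ _ fun σ ↦ by simp
  calc 𝔼 σ : Equiv.Perm α, g (σ i)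
      = 𝔼 j, 𝔼 σ : Equiv.Perm α, g (σ j) := by
        simp only [← value_independent, Fintype.expect_const]
    _ = 𝔼 σ : Equiv.Perm α, 𝔼 j, g (σ j) := Finset.expect_comm ..
    _ = 𝔼 _σ : Equiv.Perm α, 𝔼 j, g j :=
        Finset.expect_congr rfl fun σ _ ↦ Fintype.expect_equiv σ _ _ fun _ ↦ rfl
    _ = 𝔼 j, g j := Fintype.expect_const _

lemma hasDerivAt_expect_exp_mul (X : α → ℝ) (t : ℝ) :
    HasDerivAt (fun s ↦ 𝔼 x, exp (s * X x)) (𝔼 x, X x * exp (t * X x)) t := by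
  simp only [Fintype.expect_eq_sum_div_card]
  refine (HasDerivAt.fun_sum fun x _ ↦ ?_).div_const _
  simpa [mul_comm] using ((hasDerivAt_id t).mul_const (X x)).exp

-- The hypothesis makes `t ↦ 𝔼 exp (t X) * exp (-A t²)` antitone on `[0, T]` (Herbst's argument).
lemma expect_exp_mul_le_of_deriv_le [Nonempty α] {X : α → ℝ} {A T : ℝ} (hT : 0 ≤ T)
    (h : ∀ t ∈ Ioo 0 T,
      𝔼 x, X x * exp (t * X x) ≤ 2 * A * t * 𝔼 x, exp (t * X x)) :
    𝔼 x, exp (T * X x) ≤ exp (A * T ^ 2) := by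
  let m : ℝ → ℝ := fun t ↦ 𝔼 x, exp (t * X x)
  have hderiv (t : ℝ) : HasDerivAt (fun s ↦ m s * exp (-(A * s ^ 2)))
      ((𝔼 x, X x * exp (t * X x) - 2 * A * t * m t) * exp (-(A * t ^ 2))) t := by
    refine ((hasDerivAt_expect_exp_mul X t).fun_mul
      ((hasDerivAt_pow 2 t).const_mul A).fun_neg.exp).congr_deriv ?_
    push_cast
    ring
  have hanti : AntitoneOn (fun s ↦ m s * exp (-(A * s ^ 2))) (Icc 0 T) := by
    refine antitoneOn_of_hasDerivWithinAt_nonpos (convex_Icc 0 T)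
      (fun t _ ↦ (hderiv t).continuousAt.continuousWithinAt)
      (fun t _ ↦ (hderiv t).hasDerivWithinAt) fun t ht ↦ ?_
    rw [interior_Icc] at ht
    exact mul_nonpos_of_nonpos_of_nonneg (sub_nonpos.2 (h t ht)) (exp_pos _).le
  have hm0 : m 0 = 1 := by simp [m]
  have hle : m T * exp (-(A * T ^ 2)) ≤ 1 := by
    simpa [hm0] using hanti (left_mem_Icc.2 hT) (right_mem_Icc.2 hT) hT
  rwa [exp_neg, ← div_eq_mul_inv, div_le_one (exp_pos _)] at hle

lemma one_le_expect_exp [Nonempty α] {X : α → ℝ} (hX : 𝔼 x, X x = 0) : 1 ≤ 𝔼 x, exp (X x) :=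
  calc 1 = 𝔼 x, (X x + 1) := by rw [Finset.expect_add_distrib, hX, Fintype.expect_one, zero_add]
    _ ≤ 𝔼 x, exp (X x) := Finset.expect_le_expect fun x _ ↦ add_one_le_exp _

lemma expect_mul_exp_mul_nonneg {X : α → ℝ} (hX : 𝔼 x, X x = 0) {t : ℝ} (ht : 0 ≤ t) :
    0 ≤ 𝔼 x, X x * exp (t * X x) := by
  rw [← hX]
  refine Finset.expect_le_expect fun x _ ↦ ?_
  rcases le_total 0 (X x) with h | h
  · exact le_mul_of_one_le_right h (one_le_exp (mul_nonneg ht h))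
  · exact le_mul_of_le_one_right h (exp_le_one_iff.2 (mul_nonpos_of_nonneg_of_nonpos ht h))

-- Gibbs' variational principle, integrating `(Y - Z + 1) exp Z ≤ exp Y`.
lemma expect_mul_exp_le_of_expect_exp_le {Y Z : α → ℝ}
    (h : 𝔼 x, exp (Y x) ≤ 𝔼 x, exp (Z x)) :
    𝔼 x, Y x * exp (Z x) ≤ 𝔼 x, Z x * exp (Z x) := by
  have hpoint (x : α) : Y x * exp (Z x) - Z x * exp (Z x) + exp (Z x) ≤ exp (Y x) :=
    calc Y x * exp (Z x) - Z x * exp (Z x) + exp (Z x)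
        = (Y x - Z x + 1) * exp (Z x) := by ring
      _ ≤ exp (Y x - Z x) * exp (Z x) := by gcongr; exact add_one_le_exp _
      _ = exp (Y x) := by rw [← exp_add, sub_add_cancel]
  have hexpect := Finset.expect_le_expect (s := Finset.univ) fun x _ ↦ hpoint x
  rw [Finset.expect_add_distrib, Finset.expect_sub_distrib] at hexpect
  linarith

lemma two_mul_exp_sub_one_le {d : ℝ} (hd : 0 ≤ d) : 2 * (exp d - 1) ≤ d * (exp d + 1) := by
  have hlog := le_log_one_add_of_nonneg (sub_nonneg.2 (one_le_exp hd))
  rw [add_sub_cancel, log_exp, div_le_iff₀ (by linarith [exp_pos d])] at hlog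
  linarith

lemma two_mul_sub_mul_exp_sub_exp_le (x y : ℝ) :
    2 * ((x - y) * (exp x - exp y)) ≤ (x - y) ^ 2 * (exp x + exp y) := by
  wlog hyx : y ≤ x generalizing x y
  · linarith [this y x (le_of_not_ge hyx)]
  have hx : exp x = exp (x - y) * exp y := by rw [← exp_add, sub_add_cancel]
  calc 2 * ((x - y) * (exp x - exp y))
      = (x - y) * exp y * (2 * (exp (x - y) - 1)) := by rw [hx]; ring
    _ ≤ (x - y) * exp y * ((x - y) * (exp (x - y) + 1)) :=
        mul_le_mul_of_nonneg_left (two_mul_exp_sub_one_le (sub_nonneg.2 hyx))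
          (mul_nonneg (sub_nonneg.2 hyx) (exp_pos y).le)
    _ = (x - y) ^ 2 * (exp x + exp y) := by rw [hx]; ring

-- Symmetrising over `x ↔ e x` replaces `exp (t F x)` by `(exp (t F x) - exp (t F (e x))) / 2`.
lemma expect_sub_involutive_mul_exp_le {e : α → α} (he : Function.Involutive e) (F : α → ℝ)
    {t : ℝ} (ht : 0 ≤ t) :
    𝔼 x, (F x - F (e x)) * exp (t * F x) ≤
      t / 2 * 𝔼 x, (F x - F (e x)) ^ 2 * exp (t * F x) := by
  have hflip (G : α → ℝ) : 𝔼 x, G (e x) = 𝔼 x, G x :=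
    Fintype.expect_equiv he.toPerm _ _ fun _ ↦ rfl
  have hpoint (x : α) : 2 * ((F x - F (e x)) * (exp (t * F x) - exp (t * F (e x)))) ≤
      t * ((F x - F (e x)) ^ 2 * (exp (t * F x) + exp (t * F (e x)))) := by
    rcases ht.eq_or_lt with rfl | ht
    · simp
    · refine le_of_mul_le_mul_left ?_ ht
      linarith [two_mul_sub_mul_exp_sub_exp_le (t * F x) (t * F (e x))]
  have hanti : 𝔼 x, (F x - F (e x)) * exp (t * F (e x)) =
      -𝔼 x, (F x - F (e x)) * exp (t * F x) := by
    rw [← hflip, ← Finset.expect_neg_distrib]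
    exact Finset.expect_congr rfl fun x _ ↦ by rw [he x]; ring
  have hsymm : 𝔼 x, (F x - F (e x)) ^ 2 * exp (t * F (e x)) =
      𝔼 x, (F x - F (e x)) ^ 2 * exp (t * F x) := by
    rw [← hflip]
    exact Finset.expect_congr rfl fun x _ ↦ by rw [he x]; ring
  have hexpect := Finset.expect_le_expect (s := Finset.univ) fun x _ ↦ hpoint x
  simp only [← Finset.mul_expect, mul_sub, mul_add, Finset.expect_sub_distrib,
    Finset.expect_add_distrib, hanti, hsymm] at hexpect
  linarith

end UniformAverages

section PermutationStatistic

open Real Set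

variable {ι : Type*} [Fintype ι]

/-- Hoeffding's combinatorial statistic `∑ i, a i (σ i)` of an array `a` at a permutation `σ`. -/
def permStat (a : ι → ι → ℝ) (σ : Equiv.Perm ι) : ℝ := ∑ i, a i (σ i)

lemma permStat_neg (a : ι → ι → ℝ) (σ : Equiv.Perm ι) :
    permStat (fun i j ↦ -a i j) σ = -permStat a σ :=
  Finset.sum_neg_distrib _

lemma sum_expect_diagonal (a : ι → ι → ℝ) (σ : Equiv.Perm ι) :
    ∑ i, 𝔼 j, (a i (σ i) + a j (σ j)) = 2 * permStat a σ := by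
  have hfirst : ∑ i, 𝔼 _j : ι, a i (σ i) = permStat a σ :=
    Finset.sum_congr rfl fun i _ ↦ Finset.expect_const ⟨i, Finset.mem_univ i⟩ _
  have hsecond : ∑ _i : ι, 𝔼 j, a j (σ j) = permStat a σ := by
    rw [← sum_expect_comm fun i _ ↦ a i (σ i), hfirst]
  simp only [Finset.expect_add_distrib, Finset.sum_add_distrib, hfirst, hsecond, two_mul]

variable [DecidableEq ι]

lemma expect_permStat (a : ι → ι → ℝ) : 𝔼 σ, permStat a σ = ∑ i, 𝔼 j, a i j := by
  simp only [permStat, Finset.expect_sum_comm, expect_perm_apply]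

lemma sum_expect_offDiagonal (a : ι → ι → ℝ) (σ : Equiv.Perm ι) :
    ∑ i, 𝔼 j, (a i (σ j) + a j (σ i)) = 2 * 𝔼 τ, permStat a τ := by
  have hrow (i : ι) : 𝔼 j, a i (σ j) = 𝔼 j, a i j := Fintype.expect_equiv σ _ _ fun _ ↦ rfl
  simp only [Finset.expect_add_distrib, Finset.sum_add_distrib]
  rw [← sum_expect_comm fun i j ↦ a i (σ j), expect_permStat]
  simp only [hrow]
  ring

/-- The deviation of `permStat a` from its mean under the uniform distribution on permutations. -/
noncomputable def permStatDev (a : ι → ι → ℝ) (σ : Equiv.Perm ι) : ℝ :=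
  permStat a σ - 𝔼 τ, permStat a τ

lemma expect_permStatDev (a : ι → ι → ℝ) : 𝔼 σ, permStatDev a σ = 0 := by
  simp only [permStatDev, Finset.expect_sub_distrib, Fintype.expect_const, sub_self]

lemma permStatDev_neg (a : ι → ι → ℝ) (σ : Equiv.Perm ι) :
    permStatDev (fun i j ↦ -a i j) σ = -permStatDev a σ := by
  simp only [permStatDev, permStat_neg, Finset.expect_neg_distrib]
  ring

lemma permStatDev_sub_mul_swap (a : ι → ι → ℝ) (σ : Equiv.Perm ι) (i j : ι) :
    permStatDev a σ - permStatDev a (σ * Equiv.swap i j) =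
      (a i (σ i) + a j (σ j)) - (a i (σ j) + a j (σ i)) := by
  rcases eq_or_ne i j with rfl | hij
  · simp [← Equiv.Perm.one_def]
  have hsupport : ∀ k ∉ ({i, j} : Finset ι),
      a k (σ k) - a k ((σ * Equiv.swap i j) k) = 0 := fun k hk ↦ by
    simp only [Finset.mem_insert, Finset.mem_singleton, not_or] at hk
    rw [Equiv.Perm.mul_apply, Equiv.swap_apply_of_ne_of_ne hk.1 hk.2, sub_self]
  calc permStatDev a σ - permStatDev a (σ * Equiv.swap i j)
      = ∑ k, (a k (σ k) - a k ((σ * Equiv.swap i j) k)) := by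
        rw [permStatDev, permStatDev, sub_sub_sub_cancel_right, permStat, permStat,
          Finset.sum_sub_distrib]
    _ = ∑ k ∈ {i, j}, (a k (σ k) - a k ((σ * Equiv.swap i j) k)) :=
        (Finset.sum_subset (Finset.subset_univ _) fun k _ hk ↦ hsupport k hk).symm
    _ = (a i (σ i) + a j (σ j)) - (a i (σ j) + a j (σ i)) := by
        simp only [Finset.sum_pair hij, Equiv.Perm.mul_apply, Equiv.swap_apply_left,
          Equiv.swap_apply_right]
        ring

/-- The squared change of `permStat a` at `σ` under transpositions `(i j)`, with the
normalisation `(1 / N) ∑ i, ∑ j` for `N` the number of points: the carré du champ of the random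
transposition walk, up to a constant. -/
noncomputable def swapEnergy (a : ι → ι → ℝ) (σ : Equiv.Perm ι) : ℝ :=
  ∑ i, 𝔼 j, (permStatDev a σ - permStatDev a (σ * Equiv.swap i j)) ^ 2

lemma sum_expect_permStatDev_sub_mul_swap (a : ι → ι → ℝ) (σ : Equiv.Perm ι) :
    ∑ i, 𝔼 j, (permStatDev a σ - permStatDev a (σ * Equiv.swap i j)) =
      2 * permStatDev a σ := by
  simp only [permStatDev_sub_mul_swap, Finset.expect_sub_distrib, Finset.sum_sub_distrib,
    sum_expect_diagonal, sum_expect_offDiagonal]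
  rw [permStatDev]
  ring

lemma swapEnergy_le_of_sq_le {a b : ι → ι → ℝ} {C : ℝ} (σ : Equiv.Perm ι)
    (h : ∀ i j k l, ((a i k + a j l) - (a i l + a j k)) ^ 2 ≤
      C * ((b i k + b j l) + (b i l + b j k))) :
    swapEnergy a σ ≤ C * (2 * (permStatDev b σ + 2 * 𝔼 τ, permStat b τ)) :=
  calc swapEnergy a σ
      ≤ ∑ i, 𝔼 j, C * ((b i (σ i) + b j (σ j)) + (b i (σ j) + b j (σ i))) := by
        simp only [swapEnergy, permStatDev_sub_mul_swap]
        exact Finset.sum_le_sum fun i _ ↦ Finset.expect_le_expect fun j _ ↦ h i j (σ i) (σ j)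
    _ = C * (∑ i, 𝔼 j, (b i (σ i) + b j (σ j)) + ∑ i, 𝔼 j, (b i (σ j) + b j (σ i))) := by
        simp only [← Finset.mul_expect, ← Finset.mul_sum, Finset.expect_add_distrib,
          Finset.sum_add_distrib]
    _ = C * (2 * (permStatDev b σ + 2 * 𝔼 τ, permStat b τ)) := by
        rw [sum_expect_diagonal, sum_expect_offDiagonal, permStatDev]
        ring

lemma swapEnergy_le_of_mem_Icc {a : ι → ι → ℝ} (ha : ∀ i j, a i j ∈ Icc 0 1)
    (σ : Equiv.Perm ι) :
    swapEnergy a σ ≤ 4 * (permStatDev a σ + 2 * 𝔼 τ, permStat a τ) := by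
  refine (swapEnergy_le_of_sq_le (b := a) (C := 2) σ fun i j k l ↦ ?_).trans_eq (by ring)
  have sq_sub_le {x y : ℝ} (hx : x ∈ Icc 0 2) (hy : y ∈ Icc 0 2) :
      (x - y) ^ 2 ≤ 2 * (x + y) := by
    nlinarith [mul_nonneg hx.1 hy.1, mul_nonneg hx.1 (sub_nonneg.2 hx.2),
      mul_nonneg hy.1 (sub_nonneg.2 hy.2)]
  have add_mem (i j k l : ι) : a i k + a j l ∈ Icc 0 2 :=
    ⟨add_nonneg (ha i k).1 (ha j l).1, by linarith [(ha i k).2, (ha j l).2]⟩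
  exact sq_sub_le (add_mem i j k l) (add_mem i j l k)

lemma swapEnergy_le_permStat_sq (a : ι → ι → ℝ) (σ : Equiv.Perm ι) :
    swapEnergy a σ ≤ 8 * (permStatDev (fun i j ↦ a i j ^ 2) σ +
      2 * 𝔼 τ, permStat (fun i j ↦ a i j ^ 2) τ) := by
  refine (swapEnergy_le_of_sq_le (C := 4) σ fun i j k l ↦ ?_).trans_eq (by ring)
  linarith [sq_nonneg (a i k - a j l), sq_nonneg (a i l - a j k),
    sq_nonneg (a i k + a j l + (a i l + a j k))]

lemma expect_permStatDev_mul_exp_le (a : ι → ι → ℝ) {t : ℝ} (ht : 0 ≤ t) :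
    𝔼 σ, permStatDev a σ * exp (t * permStatDev a σ) ≤
      t / 4 * 𝔼 σ, swapEnergy a σ * exp (t * permStatDev a σ) := by
  let D (i j : ι) (σ : Equiv.Perm ι) : ℝ :=
    permStatDev a σ - permStatDev a (σ * Equiv.swap i j)
  let w (σ : Equiv.Perm ι) : ℝ := exp (t * permStatDev a σ)
  have hinvol (i j : ι) :
      Function.Involutive fun σ : Equiv.Perm ι ↦ σ * Equiv.swap i j :=
    fun σ ↦ Equiv.mul_swap_mul_self i j σ
  have hcomm (G : ι → ι → Equiv.Perm ι → ℝ) :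
      𝔼 σ, (∑ i, 𝔼 j, G i j σ) * w σ = ∑ i, 𝔼 j, 𝔼 σ, G i j σ * w σ := by
    simp only [Finset.sum_mul, Finset.expect_mul, Finset.expect_sum_comm]
    exact Finset.sum_congr rfl fun i _ ↦ Finset.expect_comm ..
  have hdouble : 2 * 𝔼 σ, permStatDev a σ * w σ ≤ t / 2 * 𝔼 σ, swapEnergy a σ * w σ :=
    calc 2 * 𝔼 σ, permStatDev a σ * w σ
        = ∑ i, 𝔼 j, 𝔼 σ, D i j σ * w σ := by
          simp only [← hcomm, D, sum_expect_permStatDev_sub_mul_swap, mul_assoc, Finset.mul_expect]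
      _ ≤ ∑ i, 𝔼 j, t / 2 * 𝔼 σ, D i j σ ^ 2 * w σ :=
          Finset.sum_le_sum fun i _ ↦ Finset.expect_le_expect fun j _ ↦
            expect_sub_involutive_mul_exp_le (hinvol i j) (permStatDev a) ht
      _ = t / 2 * 𝔼 σ, swapEnergy a σ * w σ := by
          simp only [← Finset.mul_expect, ← Finset.mul_sum, ← hcomm, D, swapEnergy]
  linarith

lemma expect_exp_mul_permStatDev_le_of_mem_Icc {a : ι → ι → ℝ} (ha : ∀ i j, a i j ∈ Icc 0 1)
    {T : ℝ} (hT : T ∈ Ico 0 1) :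
    𝔼 σ, exp (T * permStatDev a σ) ≤ exp ((𝔼 τ, permStat a τ) / (1 - T) * T ^ 2) := by
  refine expect_exp_mul_le_of_deriv_le hT.1 fun t ht ↦ ?_
  set μ := 𝔼 τ, permStat a τ
  set m := 𝔼 σ, exp (t * permStatDev a σ)
  set m' := 𝔼 σ, permStatDev a σ * exp (t * permStatDev a σ)
  have hm' : 0 ≤ m' := expect_mul_exp_mul_nonneg (expect_permStatDev a) ht.1.le
  have henergy : 𝔼 σ, swapEnergy a σ * exp (t * permStatDev a σ) ≤ 4 * (m' + 2 * μ * m) :=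
    calc 𝔼 σ, swapEnergy a σ * exp (t * permStatDev a σ)
        ≤ 𝔼 σ, 4 * (permStatDev a σ + 2 * μ) * exp (t * permStatDev a σ) :=
          Finset.expect_le_expect fun σ _ ↦
            mul_le_mul_of_nonneg_right (swapEnergy_le_of_mem_Icc ha σ) (exp_pos _).le
      _ = 4 * (m' + 2 * μ * m) := by
          simp only [mul_assoc, add_mul, ← Finset.mul_expect, Finset.expect_add_distrib, m, m']
  have hstein : m' ≤ t * (m' + 2 * μ * m) :=
    calc m' ≤ t / 4 * 𝔼 σ, swapEnergy a σ * exp (t * permStatDev a σ) :=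
          expect_permStatDev_mul_exp_le a ht.1.le
      _ ≤ t / 4 * (4 * (m' + 2 * μ * m)) :=
          mul_le_mul_of_nonneg_left henergy (by linarith [ht.1])
      _ = t * (m' + 2 * μ * m) := by ring
  have habsorb : m' * (1 - T) ≤ 2 * μ * t * m := by
    linarith [mul_le_mul_of_nonneg_right ht.2.le hm']
  calc m' ≤ 2 * μ * t * m / (1 - T) := (le_div_iff₀ (sub_pos.2 hT.2)).2 habsorb
    _ = 2 * (μ / (1 - T)) * t * m := by ring

lemma expect_permStatDev_sq_mul_exp_le {a : ι → ι → ℝ} (ha : ∀ i j, |a i j| ≤ 1) (t : ℝ) :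
    𝔼 σ, permStatDev (fun i j ↦ a i j ^ 2) σ * exp (t * permStatDev a σ) ≤
      2 * t * 𝔼 σ, permStatDev a σ * exp (t * permStatDev a σ) +
        (𝔼 τ, permStat (fun i j ↦ a i j ^ 2) τ) * 𝔼 σ, exp (t * permStatDev a σ) := by
  set g := permStatDev fun i j ↦ a i j ^ 2
  set V := 𝔼 τ, permStat (fun i j ↦ a i j ^ 2) τ
  have hsq (i j : ι) : a i j ^ 2 ∈ Icc 0 1 :=
    ⟨sq_nonneg _, (sq_le_one_iff_abs_le_one _).2 (ha i j)⟩
  have hg : 𝔼 σ, exp (1 / 2 * g σ - V / 2) ≤ 1 := by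
    have hhalf := expect_exp_mul_permStatDev_le_of_mem_Icc hsq (T := 1 / 2) (by norm_num)
    simp only [exp_sub, ← Finset.expect_div]
    rw [div_le_one (exp_pos _)]
    exact hhalf.trans_eq (by congr 1; ring)
  have hone : 1 ≤ 𝔼 σ, exp (t * permStatDev a σ) :=
    one_le_expect_exp (by rw [← Finset.mul_expect, expect_permStatDev, mul_zero])
  have hgibbs := expect_mul_exp_le_of_expect_exp_le (hg.trans hone)
  simp only [sub_mul, mul_assoc, Finset.expect_sub_distrib, ← Finset.mul_expect] at hgibbs
  linarith

lemma expect_exp_mul_permStatDev_le {a : ι → ι → ℝ} (ha : ∀ i j, |a i j| ≤ 1)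
    {T : ℝ} (hT : T ∈ Ico 0 (1 / 2)) :
    𝔼 σ, exp (T * permStatDev a σ) ≤
      exp (3 * (𝔼 τ, permStat (fun i j ↦ a i j ^ 2) τ) / (1 - 4 * T ^ 2) * T ^ 2) := by
  refine expect_exp_mul_le_of_deriv_le hT.1 fun t ht ↦ ?_
  set V := 𝔼 τ, permStat (fun i j ↦ a i j ^ 2) τ
  set m := 𝔼 σ, exp (t * permStatDev a σ)
  set m' := 𝔼 σ, permStatDev a σ * exp (t * permStatDev a σ)
  set K := 𝔼 σ, permStatDev (fun i j ↦ a i j ^ 2) σ * exp (t * permStatDev a σ)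
  have hm' : 0 ≤ m' := expect_mul_exp_mul_nonneg (expect_permStatDev a) ht.1.le
  have hK : K ≤ 2 * t * m' + V * m := expect_permStatDev_sq_mul_exp_le ha t
  have henergy : 𝔼 σ, swapEnergy a σ * exp (t * permStatDev a σ) ≤ 8 * (K + 2 * V * m) :=
    calc 𝔼 σ, swapEnergy a σ * exp (t * permStatDev a σ)
        ≤ 𝔼 σ, 8 * (permStatDev (fun i j ↦ a i j ^ 2) σ + 2 * V) *
            exp (t * permStatDev a σ) :=
          Finset.expect_le_expect fun σ _ ↦
            mul_le_mul_of_nonneg_right (swapEnergy_le_permStat_sq a σ) (exp_pos _).le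
      _ = 8 * (K + 2 * V * m) := by
          simp only [mul_assoc, add_mul, ← Finset.mul_expect, Finset.expect_add_distrib, m, K]
  have hstein : m' ≤ 4 * t ^ 2 * m' + 6 * V * t * m :=
    calc m' ≤ t / 4 * 𝔼 σ, swapEnergy a σ * exp (t * permStatDev a σ) :=
          expect_permStatDev_mul_exp_le a ht.1.le
      _ ≤ t / 4 * (8 * (2 * t * m' + V * m + 2 * V * m)) :=
          mul_le_mul_of_nonneg_left (by linarith) (by linarith [ht.1])
      _ = 4 * t ^ 2 * m' + 6 * V * t * m := by ring
  have htT : t ^ 2 ≤ T ^ 2 := pow_le_pow_left₀ ht.1.le ht.2.le 2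
  have habsorb : m' * (1 - 4 * T ^ 2) ≤ 6 * V * t * m := by
    linarith [mul_le_mul_of_nonneg_right htT hm']
  have hpos : 0 < 1 - 4 * T ^ 2 := by nlinarith [hT.1, hT.2]
  calc m' ≤ 6 * V * t * m / (1 - 4 * T ^ 2) := (le_div_iff₀ hpos).2 habsorb
    _ = 2 * (3 * V / (1 - 4 * T ^ 2)) * t * m := by ring

end PermutationStatistic

theorem hoeffding_statistic_mgf_bounded_general {ι : Type*} [Fintype ι] [DecidableEq ι]
    (a : ι → ι → ℝ) (ha : ∀ i j, |a i j| ≤ 1) {lam : ℝ} (hlam : |lam| < 1 / 2) :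
    𝔼 σ : Equiv.Perm ι, Real.exp (lam * (∑ i, a i (σ i) - 𝔼 τ : Equiv.Perm ι, ∑ i, a i (τ i))) ≤
      Real.exp (3 * (∑ i, 𝔼 j, a i j ^ 2) / (1 - 4 * lam ^ 2) * lam ^ 2) := by
  change 𝔼 σ, Real.exp (lam * permStatDev a σ) ≤ _
  rw [← expect_permStat]
  rcases le_total 0 lam with h | h
  · exact expect_exp_mul_permStatDev_le ha ⟨h, by rwa [abs_of_nonneg h] at hlam⟩
  · have hneg := expect_exp_mul_permStatDev_le (a := fun i j ↦ -a i j) (T := -lam)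
      (by simpa only [abs_neg] using ha) ⟨neg_nonneg.2 h, by rwa [abs_of_nonpos h] at hlam⟩
    simpa only [permStatDev_neg, neg_mul_neg, neg_sq] using hneg

lemma permExp_eq_expect (N : ℕ) (f : Equiv.Perm (Fin N) → ℝ) : permExp N f = 𝔼 σ, f σ := by
  rw [permExp, Fintype.expect_eq_sum_div_card, Fintype.card_perm, Fintype.card_fin]

/-- Subgaussian MGF bound for a Hoeffding permutation statistic with entries
in `[-1,1]`, for `|λ| ≤ 1/3`. -/
theorem hoeffding_statistic_mgf_bounded (N : ℕ)
    (a : Fin N → Fin N → ℝ)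
    (ha : ∀ i j, a i j ∈ Set.Icc (-1 : ℝ) 1)
    (VA : ℝ) (hVA : VA = (∑ i, ∑ j, (a i j) ^ 2) / (N : ℝ))
    (lam : ℝ) (hlam : |lam| ≤ 1 / 3) :
    permExp N (fun σ => Real.exp (lam *
        ((∑ i, a i (σ i)) - permExp N (fun σ' => ∑ i, a i (σ' i)))))
      ≤ Real.exp (12 * VA * lam ^ 2) := by
  have hV : ∑ i, 𝔼 j, a i j ^ 2 = VA := by
    simp only [hVA, Fintype.expect_eq_sum_div_card, Finset.sum_div, Fintype.card_fin]
  have hV0 : 0 ≤ VA := by rw [hVA]; positivity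
  have hlam_sq : lam ^ 2 ≤ 1 / 9 := by
    rw [← sq_abs]
    exact (pow_le_pow_left₀ (abs_nonneg lam) hlam 2).trans_eq (by norm_num)
  have hmgf := hoeffding_statistic_mgf_bounded_general a (fun i j ↦ abs_le.2 (ha i j))
    (hlam.trans_lt (by norm_num))
  simp only [permExp_eq_expect]
  refine hmgf.trans (Real.exp_le_exp.2 (mul_le_mul_of_nonneg_right ?_ (sq_nonneg lam)))
  rw [hV, div_le_iff₀ (by linarith)]
  nlinarith
end

section
/- Let A = [a(i,j)] ∈ R^{N×N} be a fixed matrix with all entries in [−1,1], let f(π) := Σ_{i=1}^N a(i,π(i)), and let V_A := (1/N) Σ_{i,j∈[N]} a(i,j)², assumed positive. Then (i) for every λ ≥ 0: E[ exp( λ ( f(π) − E[f(π)] ) ) ] ≤ exp( 54 V_A λ² e^{4λ} ); and consequently (ii) for every t > 0: P( f(π) − E[f(π)] ≥ t ) ≤ exp( − (t/12) · log( 1 + t / (54 V_A) ) ). -/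
open scoped BigOperators Classical

/-- Probability of an event under the uniform distribution on `S_N`. -/
noncomputable def permProb (N : ℕ) (p : Equiv.Perm (Fin N) → Prop) : ℝ :=
  ((Finset.univ.filter p).card : ℝ) / (Nat.factorial N : ℝ)

/-!
Composing a permutation with the transposition of `i` and `j` is an exchangeable move, and the
deviation `h` of the statistic satisfies a Stein equation: summed over `j` and averaged over `i`,
its decrements under these moves add up to `2 h`. Exchangeability and convexity of `exp` then bound
`𝔼 h e ^ (l h)` by `l` times the mean squared decrement weighted by `e ^ (l h)`, that is, by terms
in `∑ i, a i (σ i) ^ 2`. Since one move changes `h` by a bounded amount `D`, resampling `σ i` under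
the tilted weight costs only a factor `e ^ (D l)`, so `∑ i, a i (σ i) ^ 2` has tilted mean at most
`e ^ (D l)` times its uniform mean. Integrating the resulting bound on the derivative of
`l ↦ log 𝔼 e ^ (l h)` gives the moment bound, and Chernoff's inequality gives the tail.
-/

section

open Equiv Finset Fintype Real

section PermSum

variable {ι M : Type*} [Fintype ι]

/-- Hoeffding's combinatorial statistic `∑ i, a i (σ i)` of an array `a` and a permutation `σ`. -/
def permSum [AddCommMonoid M] (a : ι → ι → M) (σ : Perm ι) : M := ∑ i, a i (σ i)

lemma permSum_sub_permSum_mul_swap [DecidableEq ι] [AddCommGroup M] (a : ι → ι → M)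
    (σ : Perm ι) (i j : ι) :
    permSum a σ - permSum a (σ * swap i j) =
      a i (σ i) + a j (σ j) - (a i (σ j) + a j (σ i)) := by
  obtain rfl | hij := eq_or_ne i j
  · rw [swap_self, show Equiv.refl ι = 1 from rfl, mul_one, sub_self, sub_self]
  have hoff : ∀ k, k ≠ i ∧ k ≠ j → a k (σ k) - a k ((σ * swap i j) k) = 0 := fun k hk ↦ by
    simp [swap_apply_of_ne_of_ne hk.1 hk.2]
  rw [permSum, permSum, ← sum_sub_distrib, Fintype.sum_eq_add i j hij hoff]
  simp only [Perm.mul_apply, swap_apply_left, swap_apply_right]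
  abel

section Module

variable [AddCommMonoid M] [Module ℚ≥0 M] (b : ι → ι → M) (σ : Perm ι)

lemma expect_sum_diag_left : 𝔼 i, ∑ _j : ι, b i (σ i) = permSum b σ := by
  simp only [sum_const, ← smul_expect, Finset.card_univ, Fintype.card_smul_expect, permSum]

lemma expect_sum_diag_right : 𝔼 _i : ι, ∑ j, b j (σ j) = permSum b σ := by
  cases isEmpty_or_nonempty ι
  · simp [permSum]
  · exact Fintype.expect_const _

lemma expect_sum_cross_left : 𝔼 i, ∑ j, b i (σ j) = 𝔼 i, ∑ j, b i j := by
  simp only [Equiv.sum_comp σ (b _)]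

lemma expect_sum_cross_right : 𝔼 i, ∑ j, b j (σ i) = 𝔼 i, ∑ j, b i j := by
  rw [Fintype.expect_equiv σ _ (fun i ↦ ∑ j, b j i) fun _ ↦ rfl]
  simp only [expect_univ, Finset.sum_comm (f := b)]

end Module

variable {K : Type*} [DecidableEq ι] [Field K] [CharZero K]

lemma expect_permSum_mul (b : ι → ι → K) (w : Perm ι → K) :
    𝔼 σ, permSum b σ * w σ = 𝔼 i, ∑ j, 𝔼 σ, b i (σ j) * w (σ * swap i j) := by
  have hswap (i j : ι) : 𝔼 σ : Perm ι, b i (σ j) * w (σ * swap i j) = 𝔼 σ, b i (σ i) * w σ :=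
    Fintype.expect_equiv (Equiv.mulRight (swap i j)) _ _ fun σ ↦ by simp
  simp only [hswap, permSum, sum_const, ← smul_expect, Finset.card_univ, sum_mul,
    expect_sum_comm, Fintype.card_smul_expect]

lemma expect_sum_expect_mul (b : ι → ι → K) (w : Perm ι → K) :
    𝔼 i, ∑ j, 𝔼 σ : Perm ι, b i (σ j) * w σ = (𝔼 i, ∑ j, b i j) * 𝔼 σ, w σ := by
  simp only [← expect_sum_comm, ← sum_mul, Equiv.sum_comp _ (b _), ← mul_expect, ← expect_mul]

lemma expect_permSum (a : ι → ι → K) : 𝔼 σ, permSum a σ = 𝔼 i, ∑ j, a i j := by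
  simpa [Fintype.expect_one] using
    (expect_permSum_mul a fun _ ↦ 1).trans (expect_sum_expect_mul a fun _ ↦ 1)

/-- The deviation of Hoeffding's statistic from its mean over a uniformly random permutation. -/
noncomputable def permDev (a : ι → ι → K) (σ : Perm ι) : K := permSum a σ - 𝔼 τ, permSum a τ

lemma permDev_sub_permDev_mul_swap (a : ι → ι → K) (σ : Perm ι) (i j : ι) :
    permDev a σ - permDev a (σ * swap i j) =
      a i (σ i) + a j (σ j) - (a i (σ j) + a j (σ i)) := by
  rw [permDev, permDev, sub_sub_sub_cancel_right, permSum_sub_permSum_mul_swap]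

lemma expect_sum_permDev_sub_permDev_mul_swap (a : ι → ι → K) (σ : Perm ι) :
    𝔼 i, ∑ j, (permDev a σ - permDev a (σ * swap i j)) = 2 * permDev a σ := by
  simp only [permDev_sub_permDev_mul_swap, sum_sub_distrib, sum_add_distrib, expect_sub_distrib,
    expect_add_distrib, expect_sum_diag_left, expect_sum_diag_right, expect_sum_cross_left,
    expect_sum_cross_right]
  rw [permDev, expect_permSum]
  ring

end PermSum

section PermSumReal

variable {ι : Type*} [Fintype ι] [DecidableEq ι]

lemma expect_sum_sq_permDev_sub_permDev_mul_swap_le (a : ι → ι → ℝ) (σ : Perm ι) :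
    𝔼 i, ∑ j, (permDev a σ - permDev a (σ * swap i j)) ^ 2 ≤
      8 * (permSum (fun i j ↦ a i j ^ 2) σ + 𝔼 i, ∑ j, a i j ^ 2) := by
  have hfour (x y z w : ℝ) :
      (x + y - (z + w)) ^ 2 ≤ 4 * ((x ^ 2 + y ^ 2) + (z ^ 2 + w ^ 2)) := by
    linarith [add_sq_le (a := x + y) (b := -(z + w)), add_sq_le (a := x) (b := y),
      add_sq_le (a := z) (b := w), neg_sq (z + w)]
  calc 𝔼 i, ∑ j, (permDev a σ - permDev a (σ * swap i j)) ^ 2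
      ≤ 𝔼 i, ∑ j, 4 * ((a i (σ i) ^ 2 + a j (σ j) ^ 2) + (a i (σ j) ^ 2 + a j (σ i) ^ 2)) := by
        gcongr with i _ j
        rw [permDev_sub_permDev_mul_swap]
        exact hfour ..
    _ = 8 * (permSum (fun i j ↦ a i j ^ 2) σ + 𝔼 i, ∑ j, a i j ^ 2) := by
        simp only [← mul_sum, ← mul_expect, sum_add_distrib, expect_add_distrib,
          expect_sum_diag_left fun i j ↦ a i j ^ 2, expect_sum_diag_right fun i j ↦ a i j ^ 2,
          expect_sum_cross_left fun i j ↦ a i j ^ 2, expect_sum_cross_right fun i j ↦ a i j ^ 2]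
        ring

lemma expect_permSum_mul_le {b : ι → ι → ℝ} {w : Perm ι → ℝ} {C : ℝ} (hb : ∀ i j, 0 ≤ b i j)
    (hw : ∀ σ i j, w (σ * swap i j) ≤ C * w σ) :
    𝔼 σ, permSum b σ * w σ ≤ C * ((𝔼 i, ∑ j, b i j) * 𝔼 σ, w σ) := by
  calc 𝔼 σ, permSum b σ * w σ
      = 𝔼 i, ∑ j, 𝔼 σ, b i (σ j) * w (σ * swap i j) := expect_permSum_mul b w
    _ ≤ 𝔼 i, ∑ j, 𝔼 σ : Perm ι, b i (σ j) * (C * w σ) := by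
        gcongr with i _ j _ σ
        · exact hb ..
        · exact hw ..
    _ = C * ((𝔼 i, ∑ j, b i j) * 𝔼 σ, w σ) := by
        rw [expect_sum_expect_mul b fun σ ↦ C * w σ, ← mul_expect, mul_left_comm]

end PermSumReal

section Exponential

variable {Ω : Type*} [Fintype Ω]

lemma sub_mul_exp_add_sub_mul_exp_le {l : ℝ} (hl : 0 ≤ l) (x y : ℝ) :
    (x - y) * exp (l * x) + (y - x) * exp (l * y) ≤
      l * ((x - y) ^ 2 * exp (l * x) + (y - x) ^ 2 * exp (l * y)) := by
  wlog hyx : y ≤ x generalizing x y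
  · linarith [this y x (le_of_not_ge hyx)]
  have htangent : exp (l * x) - exp (l * y) ≤ l * (x - y) * exp (l * x) := by
    have := add_one_le_exp (l * y - l * x)
    rw [exp_sub, le_div_iff₀ (exp_pos _)] at this
    linarith
  calc (x - y) * exp (l * x) + (y - x) * exp (l * y)
      = (x - y) * (exp (l * x) - exp (l * y)) := by ring
    _ ≤ (x - y) * (l * (x - y) * exp (l * x)) := by gcongr
    _ ≤ (x - y) * (l * (x - y) * exp (l * x)) + l * ((y - x) ^ 2 * exp (l * y)) :=
        le_add_of_nonneg_right (by positivity)
    _ = l * ((x - y) ^ 2 * exp (l * x) + (y - x) ^ 2 * exp (l * y)) := by ring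

lemma expect_sub_mul_exp_le_of_involutive {e : Ω → Ω} (he : e.Involutive) (X : Ω → ℝ) {l : ℝ}
    (hl : 0 ≤ l) :
    𝔼 ω, (X ω - X (e ω)) * exp (l * X ω) ≤
      l * 𝔼 ω, (X ω - X (e ω)) ^ 2 * exp (l * X ω) := by
  have hexch (F : Ω → Ω → ℝ) : 𝔼 ω, F (e ω) ω = 𝔼 ω, F ω (e ω) :=
    Fintype.expect_bijective e he.bijective _ _ fun ω ↦ by rw [he ω]
  have hsymm := Finset.expect_le_expect (s := univ) fun ω _ ↦
    sub_mul_exp_add_sub_mul_exp_le hl (X ω) (X (e ω))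
  simp only [← mul_expect, expect_add_distrib] at hsymm
  rw [hexch fun ω ω' ↦ (X ω - X ω') * exp (l * X ω),
    hexch fun ω ω' ↦ (X ω - X ω') ^ 2 * exp (l * X ω)] at hsymm
  linarith

lemma le_mul_exp_sq_of_hasDerivAt_le {H H' : ℝ → ℝ} {c l : ℝ} (hl : 0 ≤ l)
    (hderiv : ∀ x, HasDerivAt H (H' x) x)
    (hbound : ∀ x ∈ Set.Ioo 0 l, H' x ≤ 2 * c * x * H x) :
    H l ≤ H 0 * exp (c * l ^ 2) := by
  have hG (x : ℝ) : HasDerivAt (fun x ↦ H x * exp (-(c * x ^ 2)))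
      ((H' x - 2 * c * x * H x) * exp (-(c * x ^ 2))) x := by
    have hq : HasDerivAt (fun x : ℝ ↦ -(c * x ^ 2)) (-(2 * c * x)) x := by
      refine ((hasDerivAt_pow 2 x).const_mul c).fun_neg.congr_deriv ?_
      norm_num
      ring
    exact ((hderiv x).mul hq.exp).congr_deriv (by ring)
  have hanti : AntitoneOn (fun x ↦ H x * exp (-(c * x ^ 2))) (Set.Icc 0 l) := by
    refine antitoneOn_of_hasDerivWithinAt_nonpos (convex_Icc 0 l)
      (fun x _ ↦ (hG x).continuousAt.continuousWithinAt)
      (fun x _ ↦ (hG x).hasDerivWithinAt) fun x hx ↦ ?_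
    rw [interior_Icc] at hx
    exact mul_nonpos_of_nonpos_of_nonneg (sub_nonpos.2 (hbound x hx)) (exp_pos _).le
  have hle := hanti (Set.left_mem_Icc.2 hl) (Set.right_mem_Icc.2 hl) hl
  simpa [exp_neg, ← div_eq_mul_inv, div_le_iff₀ (exp_pos _)] using hle

lemma expect_exp_mul_le_exp_mul_sq [Nonempty Ω] {X : Ω → ℝ} {c l : ℝ} (hl : 0 ≤ l)
    (hbound : ∀ x ∈ Set.Ioo 0 l,
      𝔼 ω, X ω * exp (x * X ω) ≤ 2 * c * x * 𝔼 ω, exp (x * X ω)) :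
    𝔼 ω, exp (l * X ω) ≤ exp (c * l ^ 2) := by
  have hderiv (x : ℝ) : HasDerivAt (fun x ↦ 𝔼 ω, exp (x * X ω)) (𝔼 ω, X ω * exp (x * X ω)) x := by
    simp only [Fintype.expect_eq_sum_div_card]
    refine (HasDerivAt.fun_sum fun ω _ ↦ ?_).div_const _
    simpa [mul_comm] using ((hasDerivAt_id x).mul_const (X ω)).exp
  simpa using le_mul_exp_sq_of_hasDerivAt_le hl hderiv hbound

lemma dens_filter_le_expect_exp_mul (X : Ω → ℝ) {l : ℝ} (hl : 0 ≤ l) (t : ℝ) :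
    ((univ.filter fun ω ↦ t ≤ X ω).dens : ℝ) ≤ exp (-(l * t)) * 𝔼 ω, exp (l * X ω) := by
  rw [nnratCast_dens, Fintype.expect_eq_sum_div_card, mul_div_assoc', mul_sum, card_filter]
  push_cast
  gcongr with ω
  rw [← exp_add]
  split_ifs with htX
  · exact one_le_exp (by linarith [mul_le_mul_of_nonneg_left htX hl])
  · exact (exp_pos _).le

lemma exists_mul_sq_mul_exp_sub_le {K D t : ℝ} (hK : 0 < K) (hD : 0 < D) (ht : 0 ≤ t) :
    ∃ l, 0 ≤ l ∧ K * l ^ 2 * exp (D * l) - l * t ≤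
      -(t / (3 * D)) * log (1 + D * t / (4 * K)) := by
  have harg : 1 ≤ 1 + D * t / (4 * K) := le_add_of_nonneg_right (by positivity)
  obtain ⟨l, hl⟩ : ∃ l, 3 * (D * l / 2) = log (1 + D * t / (4 * K)) :=
    ⟨2 * log (1 + D * t / (4 * K)) / (3 * D), by field_simp⟩
  have hl0 : 0 ≤ l := by
    have := hl ▸ log_nonneg harg
    exact le_of_mul_le_mul_left (by linarith) hD
  have hhalf : 2 * K * l * exp (D * l) ≤ t := by
    have hcube : exp (D * l) * exp (D * l / 2) = 1 + D * t / (4 * K) := by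
      rw [← exp_add, ← exp_log (zero_lt_one.trans_le harg), ← hl]
      ring_nf
    have hgrowth : exp (D * l) * (D * l / 2) ≤ D * t / (4 * K) :=
      calc exp (D * l) * (D * l / 2)
          ≤ exp (D * l) * (exp (D * l / 2) - 1) := by
            gcongr
            exact le_sub_iff_add_le.2 (add_one_le_exp _)
        _ = 1 - exp (D * l) + D * t / (4 * K) := by rw [mul_sub, hcube]; ring
        _ ≤ D * t / (4 * K) :=
            add_le_of_nonpos_left (sub_nonpos.2 (one_le_exp (by positivity)))
    rw [le_div_iff₀ (by positivity)] at hgrowth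
    exact le_of_mul_le_mul_left (by linarith) hD
  refine ⟨l, hl0, ?_⟩
  calc K * l ^ 2 * exp (D * l) - l * t
      = l * (2 * K * l * exp (D * l)) / 2 - l * t := by ring
    _ ≤ l * t / 2 - l * t := by gcongr
    _ = -(t / (3 * D)) * log (1 + D * t / (4 * K)) := by rw [← hl]; field_simp; ring

end Exponential

section Bennett

variable {ι : Type*} [Fintype ι] [DecidableEq ι] {a : ι → ι → ℝ} {D l V : ℝ}

lemma expect_permDev_mul_exp_le_expect_sq (a : ι → ι → ℝ) (hl : 0 ≤ l) :
    𝔼 σ, permDev a σ * exp (l * permDev a σ) ≤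
      4 * l * 𝔼 σ, (permSum (fun i j ↦ a i j ^ 2) σ + 𝔼 i, ∑ j, a i j ^ 2) *
        exp (l * permDev a σ) := by
  have hswap (i j : ι) : (· * swap i j : Perm ι → Perm ι).Involutive := fun σ ↦ by
    simp [mul_assoc]
  have htwice :=
    calc 2 * 𝔼 σ, permDev a σ * exp (l * permDev a σ)
        = 𝔼 i, ∑ j, 𝔼 σ, (permDev a σ - permDev a (σ * swap i j)) * exp (l * permDev a σ) := by
          simp only [mul_expect, ← mul_assoc, ← expect_sum_permDev_sub_permDev_mul_swap,
            expect_mul, sum_mul, expect_comm univ (univ : Finset ι), expect_sum_comm]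
      _ ≤ 𝔼 i, ∑ j, l * 𝔼 σ, (permDev a σ - permDev a (σ * swap i j)) ^ 2 *
            exp (l * permDev a σ) := by
          gcongr with i _ j
          exact expect_sub_mul_exp_le_of_involutive (hswap i j) _ hl
      _ = l * 𝔼 σ, (𝔼 i, ∑ j, (permDev a σ - permDev a (σ * swap i j)) ^ 2) *
            exp (l * permDev a σ) := by
          simp only [← mul_sum, ← mul_expect, expect_mul, sum_mul,
            expect_comm (univ : Finset (Perm ι)) (univ : Finset ι), expect_sum_comm]
      _ ≤ l * 𝔼 σ, 8 * (permSum (fun i j ↦ a i j ^ 2) σ + 𝔼 i, ∑ j, a i j ^ 2) *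
            exp (l * permDev a σ) := by
          gcongr with σ
          exact expect_sum_sq_permDev_sub_permDev_mul_swap_le a σ
  simp only [mul_assoc (8 : ℝ), ← mul_expect] at htwice
  linarith

lemma expect_permDev_mul_exp_le (hl : 0 ≤ l) (hD : 0 ≤ D)
    (hdiff : ∀ i j k m, a i k + a j m - (a i m + a j k) ≤ D) :
    𝔼 σ, permDev a σ * exp (l * permDev a σ) ≤
      8 * l * exp (D * l) * (𝔼 i, ∑ j, a i j ^ 2) * 𝔼 σ, exp (l * permDev a σ) := by
  set v := 𝔼 i, ∑ j, a i j ^ 2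
  set S := 𝔼 σ, exp (l * permDev a σ)
  have hinflate : v * S ≤ exp (D * l) * (v * S) :=
    le_mul_of_one_le_left (by positivity) (one_le_exp (by positivity))
  have hratio (σ : Perm ι) (i j : ι) :
      exp (l * permDev a (σ * swap i j)) ≤ exp (D * l) * exp (l * permDev a σ) := by
    have hincr : permDev a (σ * swap i j) - permDev a σ ≤ D := by
      linarith [permDev_sub_permDev_mul_swap a σ i j, hdiff i j (σ j) (σ i)]
    rw [← exp_add]
    gcongr
    linarith [mul_le_mul_of_nonneg_left hincr hl]
  have htilt : 𝔼 σ, permSum (fun i j ↦ a i j ^ 2) σ * exp (l * permDev a σ) ≤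
      exp (D * l) * (v * S) :=
    expect_permSum_mul_le (fun _ _ ↦ sq_nonneg _) hratio
  calc 𝔼 σ, permDev a σ * exp (l * permDev a σ)
      ≤ 4 * l * 𝔼 σ, (permSum (fun i j ↦ a i j ^ 2) σ + v) * exp (l * permDev a σ) :=
        expect_permDev_mul_exp_le_expect_sq a hl
    _ = 4 * l * (𝔼 σ, permSum (fun i j ↦ a i j ^ 2) σ * exp (l * permDev a σ) + v * S) := by
        simp only [add_mul, expect_add_distrib, ← mul_expect, v, S]
    _ ≤ 4 * l * (exp (D * l) * (v * S) + exp (D * l) * (v * S)) :=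
        mul_le_mul_of_nonneg_left (add_le_add htilt hinflate) (by positivity)
    _ = 8 * l * exp (D * l) * v * S := by ring

lemma expect_exp_mul_permDev_le (hl : 0 ≤ l) (hD : 0 ≤ D)
    (hdiff : ∀ i j k m, a i k + a j m - (a i m + a j k) ≤ D) (hV : 𝔼 i, ∑ j, a i j ^ 2 ≤ V) :
    𝔼 σ, exp (l * permDev a σ) ≤ exp (4 * V * l ^ 2 * exp (D * l)) := by
  have hbound : ∀ x ∈ Set.Ioo 0 l, 𝔼 σ, permDev a σ * exp (x * permDev a σ) ≤
      2 * (4 * V * exp (D * l)) * x * 𝔼 σ, exp (x * permDev a σ) := fun x ⟨hx0, hxl⟩ ↦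
    calc 𝔼 σ, permDev a σ * exp (x * permDev a σ)
        ≤ 8 * x * exp (D * x) * (𝔼 i, ∑ j, a i j ^ 2) * 𝔼 σ, exp (x * permDev a σ) :=
          expect_permDev_mul_exp_le hx0.le hD hdiff
      _ ≤ 8 * x * exp (D * l) * V * 𝔼 σ, exp (x * permDev a σ) := by gcongr
      _ = 2 * (4 * V * exp (D * l)) * x * 𝔼 σ, exp (x * permDev a σ) := by ring
  simpa only [mul_right_comm] using expect_exp_mul_le_exp_mul_sq hl hbound

lemma dens_filter_le_permDev_le (hD : 0 < D)
    (hdiff : ∀ i j k m, a i k + a j m - (a i m + a j k) ≤ D) (hVpos : 0 < V)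
    (hV : 𝔼 i, ∑ j, a i j ^ 2 ≤ V) {t : ℝ} (ht : 0 ≤ t) :
    ((univ.filter fun σ ↦ t ≤ permDev a σ).dens : ℝ) ≤
      exp (-(t / (3 * D)) * log (1 + D * t / (16 * V))) := by
  obtain ⟨l, hl, hopt⟩ :=
    exists_mul_sq_mul_exp_sub_le (K := 4 * V) (by positivity) hD ht
  calc ((univ.filter fun σ ↦ t ≤ permDev a σ).dens : ℝ)
      ≤ exp (-(l * t)) * 𝔼 σ, exp (l * permDev a σ) := dens_filter_le_expect_exp_mul _ hl t
    _ ≤ exp (-(l * t)) * exp (4 * V * l ^ 2 * exp (D * l)) := by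
        gcongr
        exact expect_exp_mul_permDev_le hl hD.le hdiff hV
    _ = exp (4 * V * l ^ 2 * exp (D * l) - l * t) := by rw [← exp_add]; ring_nf
    _ ≤ exp (-(t / (3 * D)) * log (1 + D * t / (16 * V))) := by
        gcongr
        exact hopt.trans_eq (by ring_nf)

theorem hoeffding_statistic_bennett_general (hD : 0 < D)
    (hdiff : ∀ i j k m, a i k + a j m - (a i m + a j k) ≤ D) (hVpos : 0 < V)
    (hV : 𝔼 i, ∑ j, a i j ^ 2 ≤ V) :
    (∀ l, 0 ≤ l → 𝔼 σ, exp (l * permDev a σ) ≤ exp (4 * V * l ^ 2 * exp (D * l))) ∧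
      ∀ t, 0 ≤ t → ((univ.filter fun σ ↦ t ≤ permDev a σ).dens : ℝ) ≤
        exp (-(t / (3 * D)) * log (1 + D * t / (16 * V))) :=
  ⟨fun _ hl ↦ expect_exp_mul_permDev_le hl hD.le hdiff hV,
    fun _ ht ↦ dens_filter_le_permDev_le hD hdiff hVpos hV ht⟩

end Bennett

end

lemma permProb_eq_dens (N : ℕ) (p : Equiv.Perm (Fin N) → Prop) [DecidablePred p] :
    permProb N p = (Finset.univ.filter p).dens := by
  rw [permProb, Finset.nnratCast_dens, Fintype.card_perm, Fintype.card_fin]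
  congr!

/-- Bennett-type MGF and tail bounds for a Hoeffding permutation statistic
with entries in `[-1,1]`. -/
theorem hoeffding_statistic_bennett (N : ℕ)
    (a : Fin N → Fin N → ℝ)
    (ha : ∀ i j, a i j ∈ Set.Icc (-1 : ℝ) 1)
    (VA : ℝ) (hVA : VA = (∑ i, ∑ j, (a i j) ^ 2) / (N : ℝ))
    (hVApos : 0 < VA) :
    (∀ lam : ℝ, 0 ≤ lam →
      permExp N (fun σ => Real.exp (lam *
          ((∑ i, a i (σ i)) - permExp N (fun σ' => ∑ i, a i (σ' i)))))
        ≤ Real.exp (54 * VA * lam ^ 2 * Real.exp (4 * lam)))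
    ∧ (∀ t : ℝ, 0 < t →
      permProb N (fun σ =>
          (∑ i, a i (σ i)) - permExp N (fun σ' => ∑ i, a i (σ' i)) ≥ t)
        ≤ Real.exp (-(t / 12) * Real.log (1 + t / (54 * VA)))) := by
  have hdiff (i j k m : Fin N) : a i k + a j m - (a i m + a j k) ≤ 4 := by
    linarith [(ha i k).2, (ha j m).2, (ha i m).1, (ha j k).1]
  -- The general bound has constant `4`; the factor `27 / 2` weakens it to `54`.
  have hV : 𝔼 i, ∑ j, a i j ^ 2 ≤ 27 / 2 * VA := by
    rw [Fintype.expect_eq_sum_div_card, Fintype.card_fin, ← hVA]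
    linarith
  obtain ⟨hmgf, htail⟩ := hoeffding_statistic_bennett_general four_pos hdiff (by positivity) hV
  simp only [permExp_eq_expect, permProb_eq_dens]
  exact ⟨fun l hl ↦ (hmgf l hl).trans_eq (by ring_nf),
    fun t ht ↦ (htail t ht.le).trans_eq (by ring_nf)⟩
end

section
/- There exists a universal constant K > 0 such that the following holds. Let m, n be positive integers with N := m + n ≥ 20, let z_1,...,z_N be pairwise distinct real numbers, and let π be uniformly distributed on S_N. Define c_{ij} := 1(i ≤ m and j > m), a_{kℓ} := 1(z_k < z_ℓ), and Q_U := Σ_{i,j∈[N]} c_{ij} a_{π(i)π(j)} (the permuted Mann–Whitney–Wilcoxon statistic). Then for every t > 0: P( Q_U − E[Q_U] > t ) ≤ exp( − K t² / ( N m n + N t ) ) + exp( − K t² / ( m² n² / N² + (m n)^{1/2} t ) ). -/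
open scoped BigOperators Classical

/-! The moment generating function of the statistic `U` is an explicit `q`-binomial coefficient.
Sorting the observations turns the permuted samples into a uniformly shuffled word with `m` letters
of one kind and `n` of the other, and conditioning on its first letter gives, by induction,
`E exp (x (2U - mn)) = S (m + n) / (S m * S n)` with `S m = ∏_{k ≤ m} sinh (k x) / k`; the inductive
step is the addition formula for `sinh`. Since `y ↦ sinh y / y * exp (-y² / 6)` decreases on
`y > 0`, the quotient is at most `exp (x² mn(m + n + 1) / 6)`, so `U` is sub-Gaussian with variance
proxy equal to its variance `mn(m + n + 1) / 12`, and the Chernoff bound applies. -/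

open Finset Real

theorem sinh_le_self_mul_cosh {y : ℝ} (hy : 0 ≤ y) : sinh y ≤ y * cosh y := by
  have hderiv (u : ℝ) : HasDerivAt (fun u ↦ u * cosh u - sinh u) (u * sinh u) u := by
    refine (((hasDerivAt_id' u).mul (hasDerivAt_cosh u)).sub (hasDerivAt_sinh u)).congr_deriv ?_
    ring
  have hmono : MonotoneOn (fun u ↦ u * cosh u - sinh u) (Set.Ici 0) :=
    monotoneOn_of_hasDerivWithinAt_nonneg (convex_Ici 0) (by fun_prop)
      (fun u _ ↦ (hderiv u).hasDerivWithinAt)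
      fun u hu ↦ mul_nonneg (interior_subset hu) (sinh_nonneg_iff.2 (interior_subset hu))
  simpa using hmono Set.self_mem_Ici hy hy

theorem self_mul_cosh_le {y : ℝ} (hy : 0 ≤ y) : y * cosh y ≤ (1 + y ^ 2 / 3) * sinh y := by
  have hderiv (u : ℝ) : HasDerivAt (fun u ↦ (1 + u ^ 2 / 3) * sinh u - u * cosh u)
      (u / 3 * (u * cosh u - sinh u)) u := by
    refine (((((hasDerivAt_pow 2 u).div_const 3).const_add 1).mul (hasDerivAt_sinh u)).sub
      ((hasDerivAt_id' u).mul (hasDerivAt_cosh u))).congr_deriv ?_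
    push_cast
    ring
  have hmono : MonotoneOn (fun u ↦ (1 + u ^ 2 / 3) * sinh u - u * cosh u) (Set.Ici 0) :=
    monotoneOn_of_hasDerivWithinAt_nonneg (convex_Ici 0) (by fun_prop)
      (fun u _ ↦ (hderiv u).hasDerivWithinAt)
      fun u hu ↦ mul_nonneg (div_nonneg (interior_subset hu) zero_le_three)
        (sub_nonneg.2 (sinh_le_self_mul_cosh (interior_subset hu)))
  simpa using hmono Set.self_mem_Ici hy hy

theorem antitoneOn_sinh_div_self_mul_exp :
    AntitoneOn (fun y : ℝ ↦ sinh y / y * exp (-(y ^ 2 / 6))) (Set.Ioi 0) := by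
  have hderiv (y : ℝ) (hy : 0 < y) : HasDerivAt (fun y ↦ sinh y / y * exp (-(y ^ 2 / 6)))
      ((y * cosh y - (1 + y ^ 2 / 3) * sinh y) * exp (-(y ^ 2 / 6)) / y ^ 2) y := by
    refine (((hasDerivAt_sinh y).fun_div (hasDerivAt_id' y) hy.ne').mul
      ((hasDerivAt_pow 2 y).div_const 6).fun_neg.exp).congr_deriv ?_
    field_simp
    push_cast
    ring
  refine antitoneOn_of_hasDerivWithinAt_nonpos (convex_Ioi 0)
    (HasDerivAt.continuousOn hderiv)
    (fun y hy ↦ (hderiv y (interior_subset hy)).hasDerivWithinAt) fun y hy ↦ ?_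
  have hy₀ : 0 < y := interior_subset hy
  have hcosh := self_mul_cosh_le hy₀.le
  exact div_nonpos_of_nonpos_of_nonneg
    (mul_nonpos_of_nonpos_of_nonneg (sub_nonpos.2 hcosh) (exp_pos _).le) (sq_nonneg y)

theorem exp_mul_sinh_add_exp_neg_mul_sinh (a b : ℝ) :
    exp b * sinh a + exp (-a) * sinh b = sinh (a + b) := by
  rw [← cosh_add_sinh, ← cosh_sub_sinh, sinh_add]
  ring

theorem sinh_mul_div_le {x a b : ℝ} (hx : 0 < x) (ha : 0 < a) (hab : a ≤ b) :
    sinh (b * x) / b ≤ sinh (a * x) / a * exp (x ^ 2 * (b ^ 2 - a ^ 2) / 6) := by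
  have hb : 0 < b := ha.trans_le hab
  have hanti := antitoneOn_sinh_div_self_mul_exp (mul_pos ha hx) (mul_pos hb hx)
    (mul_le_mul_of_nonneg_right hab hx.le)
  calc sinh (b * x) / b
      = x * exp ((b * x) ^ 2 / 6) * (sinh (b * x) / (b * x) * exp (-((b * x) ^ 2 / 6))) := by
        rw [exp_neg]
        field_simp
    _ ≤ x * exp ((b * x) ^ 2 / 6) * (sinh (a * x) / (a * x) * exp (-((a * x) ^ 2 / 6))) := by
        gcongr
    _ = sinh (a * x) / a * (exp ((b * x) ^ 2 / 6) * exp (-((a * x) ^ 2 / 6))) := by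
        field_simp
    _ = sinh (a * x) / a * exp (x ^ 2 * (b ^ 2 - a ^ 2) / 6) := by
        rw [← exp_add]
        ring_nf

/-- The product of `sinh (k x) / k` over `1 ≤ k ≤ m`. Up to powers of `2`, `q = exp (2 x)` and
`q - 1`, this is the quotient `[m]_q! / m!` of the `q`-factorial by the factorial. -/
noncomputable def sinhFactorial (x : ℝ) (m : ℕ) : ℝ :=
  ∏ k ∈ range m, sinh ((k + 1 : ℕ) * x) / (k + 1 : ℕ)

theorem sinhFactorial_zero (x : ℝ) : sinhFactorial x 0 = 1 := rfl

theorem sinhFactorial_succ (x : ℝ) (m : ℕ) :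
    sinhFactorial x (m + 1) = sinhFactorial x m * (sinh ((m + 1 : ℕ) * x) / (m + 1 : ℕ)) :=
  prod_range_succ _ _

theorem sinhFactorial_pos {x : ℝ} (hx : 0 < x) (m : ℕ) : 0 < sinhFactorial x m :=
  prod_pos fun k _ ↦ div_pos (sinh_pos_iff.2 (by positivity)) (by positivity)

theorem sinhFactorial_add_le {x : ℝ} (hx : 0 < x) (m n : ℕ) :
    sinhFactorial x (m + n) ≤
      exp (x ^ 2 * (m * n * (m + n + 1)) / 6) * (sinhFactorial x m * sinhFactorial x n) := by
  induction m with
  | zero => simp [sinhFactorial_zero]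
  | succ m ih =>
    have hratio := sinh_mul_div_le hx (a := (m + 1 : ℕ)) (b := (m + n + 1 : ℕ)) (by positivity)
      (by gcongr; omega)
    have hsinh : 0 ≤ sinh ((m + n + 1 : ℕ) * x) / (m + n + 1 : ℕ) :=
      div_nonneg (sinh_nonneg_iff.2 (by positivity)) (Nat.cast_nonneg _)
    have hm := (sinhFactorial_pos hx m).le
    have hn := (sinhFactorial_pos hx n).le
    rw [Nat.add_right_comm, sinhFactorial_succ, sinhFactorial_succ]
    calc _ ≤ _ := mul_le_mul ih hratio hsinh (by positivity)
      _ = exp (x ^ 2 * (m * n * (m + n + 1)) / 6)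
            * exp (x ^ 2 * ((m + n + 1 : ℕ) ^ 2 - (m + 1 : ℕ) ^ 2) / 6)
            * (sinhFactorial x m * (sinh ((m + 1 : ℕ) * x) / (m + 1 : ℕ))
              * sinhFactorial x n) := by ring
      _ = _ := by
        rw [← exp_add]
        push_cast
        ring_nf

section UniformPermutation

variable {N : ℕ}

theorem permExp_sum {ι : Type*} (s : Finset ι) (f : ι → Equiv.Perm (Fin N) → ℝ) :
    permExp N (fun σ ↦ ∑ i ∈ s, f i σ) = ∑ i ∈ s, permExp N (f i) := by
  simp only [permExp, sum_comm (s := univ) (t := s), sum_div]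

theorem permExp_const_mul (c : ℝ) (f : Equiv.Perm (Fin N) → ℝ) :
    permExp N (fun σ ↦ c * f σ) = c * permExp N f := by
  rw [permExp, permExp, ← mul_sum, mul_div_assoc]

theorem permExp_one : permExp N (fun _ ↦ 1) = 1 := by
  simp [permExp, Fintype.card_perm, Nat.factorial_ne_zero]

theorem permExp_add (f g : Equiv.Perm (Fin N) → ℝ) :
    permExp N (fun σ ↦ f σ + g σ) = permExp N f + permExp N g := by
  simp only [permExp, sum_add_distrib, add_div]

theorem permExp_comp_equiv (e : Equiv.Perm (Fin N) ≃ Equiv.Perm (Fin N))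
    (f : Equiv.Perm (Fin N) → ℝ) : permExp N (fun σ ↦ f (e σ)) = permExp N f := by
  rw [permExp, permExp, Equiv.sum_comp]

theorem permExp_succ (f : Equiv.Perm (Fin (N + 1)) → ℝ) :
    permExp (N + 1) f =
      (∑ a, permExp N fun τ ↦ f (Equiv.Perm.decomposeFin.symm (a, τ))) / (N + 1 : ℕ) := by
  simp only [permExp, ← sum_div]
  rw [← Equiv.sum_comp Equiv.Perm.decomposeFin.symm, Fintype.sum_prod_type, div_div,
    Nat.factorial_succ, Nat.cast_mul, mul_comm]

theorem permProb_lt_le_exp_mul_permExp (f : Equiv.Perm (Fin N) → ℝ) {θ : ℝ} (hθ : 0 ≤ θ) (t : ℝ) :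
    permProb N (fun σ ↦ t < f σ) ≤ exp (-(θ * t)) * permExp N (fun σ ↦ exp (θ * f σ)) := by
  rw [← permExp_const_mul, permProb, permExp, ← sum_boole]
  gcongr with σ
  split_ifs with h
  · rw [← exp_add, one_le_exp_iff]
    linarith [mul_le_mul_of_nonneg_left h.le hθ]
  · positivity

theorem permExp_ite_lt {α : Type*} [LinearOrder α] {z : Fin N → α} (hz : Function.Injective z)
    {i j : Fin N} (hij : i ≠ j) :
    permExp N (fun σ ↦ if z (σ i) < z (σ j) then 1 else 0) = 1 / 2 := by
  have hsymm : permExp N (fun σ ↦ if z (σ j) < z (σ i) then 1 else 0) =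
      permExp N (fun σ ↦ if z (σ i) < z (σ j) then 1 else 0) := by
    rw [← permExp_comp_equiv (Equiv.mulRight (Equiv.swap i j))]
    simp
  have htotal : permExp N (fun σ ↦ if z (σ i) < z (σ j) then 1 else 0) +
      permExp N (fun σ ↦ if z (σ j) < z (σ i) then 1 else 0) = 1 := by
    rw [← permExp_add]
    refine Eq.trans ?_ (permExp_one (N := N))
    congr with σ
    rcases (hz.ne (σ.injective.ne hij)).lt_or_gt with h | h <;> simp [h, h.not_gt]
  linarith

end UniformPermutation

section Statistic

variable {ι κ α β : Type*} [Fintype ι] [Fintype κ]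

/-- The Mann–Whitney–Wilcoxon statistic of the observations `z`: the number of pairs `(i, j)` with
`z i < z j`, where `i` ranges over the first sample (the indices satisfying `w`) and `j` over the
second sample (those that do not). -/
noncomputable def mannWhitney [LinearOrder α] (w : ι → Bool) (z : ι → α) : ℝ :=
  ∑ i with w i, ∑ j with ¬ w j, if z i < z j then 1 else 0

theorem mannWhitney_eq_sum_ite_mul_ite [LinearOrder α] (w : ι → Bool) (z : ι → α) :
    mannWhitney w z =
      ∑ i, ∑ j, (if w i ∧ ¬ w j then 1 else 0) * (if z i < z j then 1 else 0) := by
  simp only [mannWhitney, sum_filter, ite_and, ite_mul, one_mul, zero_mul, sum_ite_irrel,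
    sum_const_zero]

theorem mannWhitney_comp_equiv [LinearOrder α] (w : ι → Bool) (z : ι → α) (e : κ ≃ ι) :
    mannWhitney (w ∘ e) (z ∘ e) = mannWhitney w z := by
  simp only [mannWhitney, sum_filter, Function.comp_apply,
    ← Equiv.sum_comp e (fun i ↦ if w i then _ else _),
    ← Equiv.sum_comp e (fun j ↦ if ¬ w j then _ else _)]

theorem mannWhitney_strictMono_comp [LinearOrder α] [LinearOrder β] {f : α → β} (hf : StrictMono f)
    (w : ι → Bool) (z : ι → α) : mannWhitney w (f ∘ z) = mannWhitney w z := by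
  unfold mannWhitney
  congr! 5
  exact hf.lt_iff_lt

theorem card_filter_comp_equiv (p : ι → Prop) [DecidablePred p] (e : κ ≃ ι) :
    #{k | p (e k)} = #{i | p i} :=
  card_equiv e (by simp)

variable {N : ℕ}

theorem permExp_mannWhitney_comp_perm [LinearOrder α] (w : Fin N → Bool) {z : Fin N → α}
    (hz : Function.Injective z) (F : ℝ → ℝ) :
    permExp N (fun σ ↦ F (mannWhitney w (z ∘ σ))) =
      permExp N (fun τ ↦ F (mannWhitney (w ∘ τ) id)) := by
  let ρ := Tuple.sort z
  have hρ : StrictMono (z ∘ ρ) :=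
    (Tuple.monotone_sort z).strictMono_of_injective (hz.comp ρ.injective)
  let e : Equiv.Perm (Fin N) ≃ Equiv.Perm (Fin N) := (Equiv.inv _).trans (Equiv.mulRight ρ)
  have hsorted (σ : Equiv.Perm (Fin N)) :
      mannWhitney w (z ∘ σ) = mannWhitney (w ∘ e σ) id := by
    have hz_sort : (z ∘ σ) ∘ e σ = (z ∘ ρ) ∘ id := by
      ext
      simp [e]
    rw [← mannWhitney_comp_equiv w _ (e σ), hz_sort, mannWhitney_strictMono_comp hρ]
  simp only [hsorted]
  exact permExp_comp_equiv e fun τ ↦ F (mannWhitney (w ∘ τ) id)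

theorem permExp_mannWhitney [LinearOrder α] (w : Fin N → Bool) {z : Fin N → α}
    (hz : Function.Injective z) :
    permExp N (fun σ ↦ mannWhitney w (z ∘ σ)) = #{i | w i} * #{i | ¬ w i} / 2 := by
  calc permExp N (fun σ ↦ mannWhitney w (z ∘ σ))
      = ∑ i with w i, ∑ j with ¬ w j, permExp N fun σ ↦ if z (σ i) < z (σ j) then 1 else 0 := by
        simp only [mannWhitney, permExp_sum, Function.comp_apply]
    _ = ∑ i with w i, ∑ j with ¬ w j, (1 / 2 : ℝ) := by
        refine sum_congr rfl fun i hi ↦ sum_congr rfl fun j hj ↦ permExp_ite_lt hz ?_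
        rintro rfl
        exact (mem_filter.1 hj).2 (mem_filter.1 hi).2
    _ = #{i | w i} * #{i | ¬ w i} / 2 := by
        simp only [sum_const, nsmul_eq_mul]
        ring

end Statistic

section Words

variable {N : ℕ}

/-- Twice the deviation from its mean of the Mann–Whitney–Wilcoxon statistic of observations listed
in increasing order. The word `w` records which of them belong to the first sample. -/
noncomputable def wordDeviation (w : Fin N → Bool) : ℝ :=
  2 * mannWhitney w id - #{k | w k} * #{k | ¬ w k}

theorem mannWhitney_id_succ (w : Fin (N + 1) → Bool) :
    mannWhitney w id =
      (if w 0 then (#{k : Fin N | ¬ w k.succ} : ℝ) else 0) + mannWhitney (w ∘ Fin.succ) id := by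
  rw [← sum_boole]
  by_cases h : w 0 <;> simp [mannWhitney, sum_filter, Fin.sum_univ_succ, h, -sum_boole]

theorem wordDeviation_succ (w : Fin (N + 1) → Bool) :
    wordDeviation w =
      (if w 0 then (#{k | ¬ w k} : ℝ) else -#{k | w k}) + wordDeviation (w ∘ Fin.succ) := by
  by_cases h : w 0 <;>
  · simp only [wordDeviation, mannWhitney_id_succ, Fin.card_filter_univ_succ, h,
      Function.comp_apply, ite_not, if_true]
    push_cast
    ring

/-- The word left over from `w` when its letter at position `a` is removed. The letter at position
`0` takes the vacant place, as this is what `Equiv.Perm.decomposeFin` produces; the order of the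
remaining letters is immaterial once they are shuffled. -/
def eraseLetter (w : Fin (N + 1) → Bool) (a : Fin (N + 1)) : Fin N → Bool :=
  fun k ↦ w (Equiv.swap 0 a k.succ)

theorem card_filter_eraseLetter (w : Fin (N + 1) → Bool) (a : Fin (N + 1)) (p : Bool → Prop)
    [DecidablePred p] :
    #{k | p (w k)} = (if p (w a) then 1 else 0) + #{k | p (eraseLetter w a k)} := by
  rw [← card_filter_comp_equiv (fun k ↦ p (w k)) (Equiv.swap 0 a), Fin.card_filter_univ_succ',
    Equiv.swap_apply_left]
  rfl

theorem card_filter_add_card_filter_not_word (w : Fin N → Bool) :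
    #{k | w k} + #{k | ¬ w k} = N := by
  rw [card_filter_add_card_filter_not, card_univ, Fintype.card_fin]

theorem sinhFactorial_mul_sinhFactorial_eraseLetter (x : ℝ) (w : Fin (N + 1) → Bool)
    (a : Fin (N + 1)) {m n : ℕ} (hm : #{k | w k} = m) (hn : #{k | ¬ w k} = n) :
    sinhFactorial x m * sinhFactorial x n =
      (if w a then sinh (m * x) / m else sinh (n * x) / n) *
        (sinhFactorial x #{k | eraseLetter w a k} *
          sinhFactorial x #{k | ¬ eraseLetter w a k}) := by
  rw [card_filter_eraseLetter w a fun b ↦ b] at hm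
  rw [card_filter_eraseLetter w a fun b ↦ ¬ b] at hn
  subst hm hn
  by_cases h : w a
  · simp only [h, if_true, if_false, not_true, zero_add, add_comm 1, sinhFactorial_succ]
    ring
  · simp only [h, if_true, if_false, not_false_eq_true, Bool.false_eq_true, zero_add, add_comm 1,
      sinhFactorial_succ]
    ring

theorem wordDeviation_comp_decomposeFin (w : Fin (N + 1) → Bool) (a : Fin (N + 1))
    (τ : Equiv.Perm (Fin N)) :
    wordDeviation (w ∘ Equiv.Perm.decomposeFin.symm (a, τ)) =
      (if w a then (#{k | ¬ w k} : ℝ) else -#{k | w k}) + wordDeviation (eraseLetter w a ∘ τ) := by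
  have hletters : (w ∘ Equiv.Perm.decomposeFin.symm (a, τ)) ∘ Fin.succ = eraseLetter w a ∘ τ := by
    ext
    simp [eraseLetter]
  rw [wordDeviation_succ, hletters]
  simp only [Function.comp_apply, Equiv.Perm.decomposeFin_symm_apply_zero,
    card_filter_comp_equiv (fun k ↦ w k), card_filter_comp_equiv (fun k ↦ ¬ w k)]

theorem permExp_exp_mul_wordDeviation_mul (x : ℝ) {w : Fin N → Bool} {m n : ℕ}
    (hm : #{k | w k} = m) (hn : #{k | ¬ w k} = n) :
    permExp N (fun τ ↦ exp (x * wordDeviation (w ∘ τ))) *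
      (sinhFactorial x m * sinhFactorial x n) = sinhFactorial x N := by
  induction N generalizing m n with
  | zero =>
    subst hm hn
    simp [permExp, wordDeviation, mannWhitney, sinhFactorial_zero]
  | succ N ih =>
    let weight (a : Fin (N + 1)) : ℝ :=
      if w a then exp (n * x) * (sinh (m * x) / m) else exp (-(m * x)) * (sinh (n * x) / n)
    have hfirst (a : Fin (N + 1)) :
        permExp N (fun τ ↦ exp (x * wordDeviation (w ∘ Equiv.Perm.decomposeFin.symm (a, τ)))) *
          (sinhFactorial x m * sinhFactorial x n) = weight a * sinhFactorial x N := by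
      rw [sinhFactorial_mul_sinhFactorial_eraseLetter x w a hm hn,
        ← ih (w := eraseLetter w a) rfl rfl]
      simp only [wordDeviation_comp_decomposeFin, hm, hn, mul_add, exp_add, permExp_const_mul,
        weight]
      split_ifs <;> ring_nf
    have hsum : ∑ a, weight a = sinh ((N + 1 : ℕ) * x) := by
      have hcancel (k : ℕ) : k * (sinh (k * x) / k) = sinh (k * x) :=
        mul_div_cancel_of_imp' fun hk ↦ by simp [hk]
      simp only [weight, sum_ite, sum_const, nsmul_eq_mul, hm, hn]
      rw [mul_left_comm, hcancel, mul_left_comm, hcancel, exp_mul_sinh_add_exp_neg_mul_sinh,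
        ← add_mul, ← card_filter_add_card_filter_not_word w, hm, hn, Nat.cast_add]
    rw [permExp_succ, div_mul_eq_mul_div, sum_mul, sum_congr rfl fun a _ ↦ hfirst a, ← sum_mul,
      hsum, sinhFactorial_succ]
    ring

theorem permExp_exp_mul_wordDeviation_le {x : ℝ} (hx : 0 < x) {w : Fin N → Bool} {m n : ℕ}
    (hm : #{k | w k} = m) (hn : #{k | ¬ w k} = n) :
    permExp N (fun τ ↦ exp (x * wordDeviation (w ∘ τ))) ≤
      exp (x ^ 2 * (m * n * (m + n + 1)) / 6) := by
  have hN : N = m + n := by rw [← hm, ← hn, card_filter_add_card_filter_not_word]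
  refine le_of_mul_le_mul_right ?_ (mul_pos (sinhFactorial_pos hx m) (sinhFactorial_pos hx n))
  calc _ = sinhFactorial x N := permExp_exp_mul_wordDeviation_mul x hm hn
    _ ≤ _ := hN ▸ sinhFactorial_add_le hx m n

theorem permExp_exp_mul_mannWhitney_sub_le {α : Type*} [LinearOrder α] {θ : ℝ} (hθ : 0 < θ)
    {m n : ℕ} {w : Fin N → Bool} (hm : #{i | w i} = m) (hn : #{i | ¬ w i} = n) {z : Fin N → α}
    (hz : Function.Injective z) :
    permExp N (fun σ ↦ exp (θ * (mannWhitney w (z ∘ σ) - m * n / 2))) ≤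
      exp (θ ^ 2 * (m * n * (m + n + 1)) / 24) := by
  have hdev (τ : Equiv.Perm (Fin N)) :
      θ * (mannWhitney (w ∘ τ) id - m * n / 2) = θ / 2 * wordDeviation (w ∘ τ) := by
    simp only [wordDeviation, Function.comp_apply, card_filter_comp_equiv (fun k ↦ w k),
      card_filter_comp_equiv (fun k ↦ ¬ w k), hm, hn]
    ring
  rw [permExp_mannWhitney_comp_perm w hz fun u ↦ exp (θ * (u - m * n / 2))]
  simp only [hdev]
  refine (permExp_exp_mul_wordDeviation_le (half_pos hθ) hm hn).trans_eq ?_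
  ring_nf

end Words

theorem mann_whitney_wilcoxon_tail_general {α : Type*} [LinearOrder α] {N m n : ℕ} (hm₀ : 0 < m)
    (hn₀ : 0 < n) {w : Fin N → Bool} (hm : #{i | w i} = m) (hn : #{i | ¬ w i} = n) {z : Fin N → α}
    (hz : Function.Injective z) {t : ℝ} (ht : 0 < t) :
    permProb N (fun σ ↦
        mannWhitney w (z ∘ σ) - permExp N (fun σ' ↦ mannWhitney w (z ∘ σ')) > t) ≤
      exp (-(6 * t ^ 2 / (m * n * (m + n + 1)))) := by
  set V : ℝ := m * n * (m + n + 1)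
  have hV₀ : 0 < V := by positivity
  have hθ : 0 < 12 * t / V := by positivity
  rw [permExp_mannWhitney w hz, hm, hn]
  calc _ ≤ exp (-(12 * t / V * t)) * permExp N (fun σ ↦
          exp (12 * t / V * (mannWhitney w (z ∘ σ) - m * n / 2))) :=
        permProb_lt_le_exp_mul_permExp _ hθ.le t
    _ ≤ exp (-(12 * t / V * t)) * exp ((12 * t / V) ^ 2 * V / 24) := by
        gcongr
        exact permExp_exp_mul_mannWhitney_sub_le hθ hm hn hz
    _ = exp (-(6 * t ^ 2 / V)) := by
        rw [← exp_add]
        congr 1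
        field_simp
        ring

theorem bernstein_exponent_le_subGaussian_exponent {m n : ℕ} (hm : 0 < m) (hn : 0 < n) {t : ℝ}
    (ht : 0 ≤ t) :
    3 * t ^ 2 / ((m + n : ℕ) * m * n + (m + n : ℕ) * t) ≤ 6 * t ^ 2 / (m * n * (m + n + 1)) := by
  have hN : (1 : ℝ) ≤ m + n := by exact_mod_cast Nat.le_add_right_of_le hm
  calc 3 * t ^ 2 / ((m + n : ℕ) * m * n + (m + n : ℕ) * t)
      ≤ 3 * t ^ 2 / (m * n * (m + n)) := by
        rw [Nat.cast_add]
        gcongr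
        linarith [mul_nonneg (zero_le_one.trans hN) ht]
    _ = 6 * t ^ 2 / (m * n * (m + n + (m + n))) := by
        field_simp
        ring
    _ ≤ 6 * t ^ 2 / (m * n * (m + n + 1)) := by gcongr

/-- Concentration of the permuted Mann–Whitney–Wilcoxon statistic.  Here the
first `m` indices of `Fin (m+n)` correspond to the first sample and the last
`n` indices to the second sample, and `z` lists the pairwise-distinct pooled
observations. -/
theorem mann_whitney_wilcoxon_tail :
    ∃ K : ℝ, 0 < K ∧
      ∀ (m n N : ℕ), 0 < m → 0 < n → N = m + n → 20 ≤ N →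
      ∀ (z : Fin N → ℝ), Function.Injective z →
      ∀ t : ℝ, 0 < t →
        permProb N (fun σ =>
            (∑ i : Fin N, ∑ j : Fin N,
              (if (i : ℕ) < m ∧ m ≤ (j : ℕ) then (1 : ℝ) else 0) *
              (if z (σ i) < z (σ j) then (1 : ℝ) else 0))
              - permExp N (fun σ' => ∑ i : Fin N, ∑ j : Fin N,
                  (if (i : ℕ) < m ∧ m ≤ (j : ℕ) then (1 : ℝ) else 0) *
                  (if z (σ' i) < z (σ' j) then (1 : ℝ) else 0)) > t)
          ≤ Real.exp (-(K * t ^ 2 / ((N : ℝ) * (m : ℝ) * (n : ℝ) + (N : ℝ) * t)))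
            + Real.exp (-(K * t ^ 2 /
                ((m : ℝ) ^ 2 * (n : ℝ) ^ 2 / (N : ℝ) ^ 2 +
                  Real.sqrt ((m : ℝ) * (n : ℝ)) * t))) := by
  refine ⟨3, by norm_num, fun m n N hm hn hN _ z hz t ht ↦ ?_⟩
  subst hN
  have hfirst : #{i : Fin (m + n) | decide ((i : ℕ) < m)} = m := by
    simp [Fin.card_filter_val_lt]
  have hsecond : #{i : Fin (m + n) | ¬ decide ((i : ℕ) < m)} = n := by
    have := card_filter_add_card_filter_not_word fun i : Fin (m + n) ↦ decide ((i : ℕ) < m)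
    omega
  have htail := mann_whitney_wilcoxon_tail_general hm hn hfirst hsecond hz ht
  simp only [mannWhitney_eq_sum_ite_mul_ite, decide_eq_true_eq, not_lt] at htail
  have hexp := exp_le_exp.2 (neg_le_neg (bernstein_exponent_le_subGaussian_exponent hm hn ht.le))
  exact (htail.trans hexp).trans (le_add_of_nonneg_right (exp_pos _).le)
end
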